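/- Let (Ω_n, P_n, π_n) be a sequence of finite irreducible reversible Markov chains. The sequence exhibits a continuous-time cutoff if and only if it exhibits an averaged cutoff. -/

import Mathlib

open Matrix Filter Asymptotics

/-- `P` is a stochastic matrix. -/
def IsStochastic {Ω : Type*} [Fintype Ω] (P : Matrix Ω Ω ℝ) : Prop :=
  (∀ x y, 0 ≤ P x y) ∧ ∀ x, ∑ y, P x y = 1

/-- `P` is irreducible. -/
def IsIrreducibleMatrix {Ω : Type*} [Fintype Ω] [DecidableEq Ω] (P : Matrix Ω Ω ℝ) : Prop :=
  ∀ x y, ∃ n : ℕ, 0 < (P ^ n) x y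

/-- `μ` is a probability vector. -/
def IsProbVec {Ω : Type*} [Fintype Ω] (μ : Ω → ℝ) : Prop :=
  (∀ x, 0 ≤ μ x) ∧ ∑ x, μ x = 1

/-- The chain `(P, pi)` is reversible. -/
def IsReversible {Ω : Type*} [Fintype Ω] (P : Matrix Ω Ω ℝ) (pi : Ω → ℝ) : Prop :=
  ∀ x y, pi x * P x y = pi y * P y x

/-- A finite irreducible Markov chain `P` with stationary distribution `pi`. -/
def IsMC {Ω : Type*} [Fintype Ω] [DecidableEq Ω] (P : Matrix Ω Ω ℝ) (pi : Ω → ℝ) : Prop :=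
  IsStochastic P ∧ IsIrreducibleMatrix P ∧ IsProbVec pi ∧ pi ᵥ* P = pi

/-- A finite irreducible reversible Markov chain `P` with stationary distribution `pi`. -/
def IsRevMC {Ω : Type*} [Fintype Ω] [DecidableEq Ω] (P : Matrix Ω Ω ℝ) (pi : Ω → ℝ) : Prop :=
  IsMC P pi ∧ IsReversible P pi

/-- Total-variation distance between two measures on a finite set. -/
noncomputable def tvDist {Ω : Type*} [Fintype Ω] (μ ν : Ω → ℝ) : ℝ :=
  (∑ x, |μ x - ν x|) / 2

/-- The lazy version `(I + P)/2` of `P`. -/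
noncomputable def lazyM {Ω : Type*} [Fintype Ω] [DecidableEq Ω] (P : Matrix Ω Ω ℝ) :
    Matrix Ω Ω ℝ :=
  (2 : ℝ)⁻¹ • (1 + P)

/-- `d_c(t, μ)`: TV distance from stationarity of the continuous-time chain at time `t`,
started from `μ`. -/
noncomputable def contDist {Ω : Type*} [Fintype Ω] [DecidableEq Ω] (P : Matrix Ω Ω ℝ) (pi : Ω → ℝ)
    (t : ℝ) (μ : Ω → ℝ) : ℝ :=
  tvDist (fun y => ∑' k : ℕ, Real.exp (-t) * t ^ k / (Nat.factorial k) * (μ ᵥ* (P ^ k)) y) pi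

/-- `d_L(t, μ)`: TV distance from stationarity of the lazy chain at (discrete) time `t`,
started from `μ`. -/
noncomputable def lazyDist {Ω : Type*} [Fintype Ω] [DecidableEq Ω] (P : Matrix Ω Ω ℝ)
    (pi : Ω → ℝ) (t : ℝ) (μ : Ω → ℝ) : ℝ :=
  tvDist (μ ᵥ* (lazyM P ^ ⌊t⌋₊)) pi

/-- `d_ave(t, μ)`: TV distance from stationarity of the averaged chain at (discrete) time `t`,
started from `μ`. -/
noncomputable def aveDist {Ω : Type*} [Fintype Ω] [DecidableEq Ω] (P : Matrix Ω Ω ℝ) (pi : Ω → ℝ)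
    (t : ℝ) (μ : Ω → ℝ) : ℝ :=
  tvDist (fun y => ((μ ᵥ* (P ^ ⌊t⌋₊)) y + (μ ᵥ* (P ^ (⌊t⌋₊ + 1))) y) / 2) pi

/-- The point mass at `x`. -/
noncomputable def deltaMass {Ω : Type*} [DecidableEq Ω] (x : Ω) : Ω → ℝ :=
  fun y => if y = x then 1 else 0

/-- Worst-case continuous-time distance `d_c(t)`. -/
noncomputable def contDistMax {Ω : Type*} [Fintype Ω] [DecidableEq Ω] (P : Matrix Ω Ω ℝ)
    (pi : Ω → ℝ) (t : ℝ) : ℝ :=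
  ⨆ x : Ω, contDist P pi t (deltaMass x)

/-- Worst-case lazy distance `d_L(t)`. -/
noncomputable def lazyDistMax {Ω : Type*} [Fintype Ω] [DecidableEq Ω] (P : Matrix Ω Ω ℝ)
    (pi : Ω → ℝ) (t : ℝ) : ℝ :=
  ⨆ x : Ω, lazyDist P pi t (deltaMass x)

/-- Worst-case averaged distance `d_ave(t)`. -/
noncomputable def aveDistMax {Ω : Type*} [Fintype Ω] [DecidableEq Ω] (P : Matrix Ω Ω ℝ)
    (pi : Ω → ℝ) (t : ℝ) : ℝ :=
  ⨆ x : Ω, aveDist P pi t (deltaMass x)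

/-- `φ_{α,C}(t) = t + ⌈C t^{(1+2α)/2} √(α log t)⌉`. -/
noncomputable def phiAC (α C t : ℝ) : ℝ :=
  t + ((⌈C * t ^ ((1 + 2 * α) / 2) * Real.sqrt (α * Real.log t)⌉ : ℤ) : ℝ)

/-- `ψ_{α,C}(x) = min (1, x + C |log(2x)|^{-α})`. -/
noncomputable def psiAC (α C x : ℝ) : ℝ :=
  min 1 (x + C * |Real.log (2 * x)| ^ (-α))

/-- `t_c(ε)`, the `ε`-mixing time of the continuous-time chain. -/
noncomputable def contMix {Ω : Type*} [Fintype Ω] [DecidableEq Ω] (P : Matrix Ω Ω ℝ)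
    (pi : Ω → ℝ) (ε : ℝ) : ℝ :=
  sInf {t : ℝ | 0 ≤ t ∧ contDistMax P pi t ≤ ε}

/-- `t_L(ε)`, the `ε`-mixing time of the lazy chain. -/
noncomputable def lazyMix {Ω : Type*} [Fintype Ω] [DecidableEq Ω] (P : Matrix Ω Ω ℝ)
    (pi : Ω → ℝ) (ε : ℝ) : ℕ :=
  sInf {t : ℕ | lazyDistMax P pi t ≤ ε}

/-- `t_ave(ε)`, the `ε`-mixing time of the averaged chain. -/
noncomputable def aveMix {Ω : Type*} [Fintype Ω] [DecidableEq Ω] (P : Matrix Ω Ω ℝ)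
    (pi : Ω → ℝ) (ε : ℝ) : ℕ :=
  sInf {t : ℕ | aveDistMax P pi t ≤ ε}

/-- The sequence of continuous-time chains exhibits cutoff. -/
def ContCutoff {Ω : ℕ → Type} [∀ n, Fintype (Ω n)] [∀ n, DecidableEq (Ω n)]
    (P : ∀ n, Matrix (Ω n) (Ω n) ℝ) (pi : ∀ n, Ω n → ℝ) : Prop :=
  ∀ ε : ℝ, 0 < ε → ε < 1 →
    Tendsto (fun n => contMix (P n) (pi n) ε / contMix (P n) (pi n) (1 - ε)) atTop (nhds 1)

/-- The sequence of lazy chains exhibits cutoff. -/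
def LazyCutoff {Ω : ℕ → Type} [∀ n, Fintype (Ω n)] [∀ n, DecidableEq (Ω n)]
    (P : ∀ n, Matrix (Ω n) (Ω n) ℝ) (pi : ∀ n, Ω n → ℝ) : Prop :=
  ∀ ε : ℝ, 0 < ε → ε < 1 →
    Tendsto (fun n => (lazyMix (P n) (pi n) ε : ℝ) / (lazyMix (P n) (pi n) (1 - ε) : ℝ))
      atTop (nhds 1)

/-- The sequence of averaged chains exhibits cutoff. -/
def AveCutoff {Ω : ℕ → Type} [∀ n, Fintype (Ω n)] [∀ n, DecidableEq (Ω n)]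
    (P : ∀ n, Matrix (Ω n) (Ω n) ℝ) (pi : ∀ n, Ω n → ℝ) : Prop :=
  ∀ ε : ℝ, 0 < ε → ε < 1 →
    Tendsto (fun n => (aveMix (P n) (pi n) ε : ℝ) / (aveMix (P n) (pi n) (1 - ε) : ℝ))
      atTop (nhds 1)

/-- The sequence of continuous-time chains exhibits cutoff with window `w`. -/
def ContCutoffWindow {Ω : ℕ → Type} [∀ n, Fintype (Ω n)] [∀ n, DecidableEq (Ω n)]
    (P : ∀ n, Matrix (Ω n) (Ω n) ℝ) (pi : ∀ n, Ω n → ℝ) (w : ℕ → ℝ) : Prop :=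
  ContCutoff P pi ∧
  (fun n => w n) =o[atTop] (fun n => contMix (P n) (pi n) (1 / 4)) ∧
  ∀ ε : ℝ, 0 < ε → ε ≤ 1 / 4 → ∃ Cε : ℝ, 0 < Cε ∧
    ∀ n, contMix (P n) (pi n) ε - contMix (P n) (pi n) (1 - ε) ≤ Cε * w n

/-- The sequence of averaged chains exhibits cutoff with window `w`. -/
def AveCutoffWindow {Ω : ℕ → Type} [∀ n, Fintype (Ω n)] [∀ n, DecidableEq (Ω n)]
    (P : ∀ n, Matrix (Ω n) (Ω n) ℝ) (pi : ∀ n, Ω n → ℝ) (w : ℕ → ℝ) : Prop :=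
  AveCutoff P pi ∧
  (fun n => w n) =o[atTop] (fun n => (aveMix (P n) (pi n) (1 / 4) : ℝ)) ∧
  ∀ ε : ℝ, 0 < ε → ε ≤ 1 / 4 → ∃ Cε : ℝ, 0 < Cε ∧
    ∀ n, (aveMix (P n) (pi n) ε : ℝ) - (aveMix (P n) (pi n) (1 - ε) : ℝ) ≤ Cε * w n

/-!
A Poisson time `N` of mean `t` lies within `O(√t)` of `t`, and `N` and `N + 1` are close in law
when `t` is large. Hence the continuous-time chain is close to the averaged chain run up to time
`N`, and mixing of the averaged chain by time `m` gives mixing of the continuous-time chain shortly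
after `m`.

For the converse fix a function `f` on the state space. Reversibility and a spectral gap give a
maximal inequality in `L²(π)`: the set `B` of points from which the averaged expectation of `f`
deviates from its stationary value at some time at least `w` has small `π`-measure as soon as `w`
is large compared with the relaxation time. If the continuous-time chain is mixed at time `t`, then
the discrete chain is unlikely to stay in `B` throughout the steps up to a time slightly larger
than `t`, and from the moment it leaves `B` the averaged chain needs only `w` more steps.

Either cutoff forces the mixing times to tend to infinity, with relaxation times of smaller order.
So both time lags are negligible, and the two notions of cutoff are equivalent.
-/

section Poisson

/-- The mass that the Poisson distribution with mean `t` gives to `k`, in the form in which it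
appears in `contDist`. -/
noncomputable def poissonWeight (t : ℝ) (k : ℕ) : ℝ := Real.exp (-t) * t ^ k / k.factorial

/-- The expectation of `u N` for a Poisson variable `N` with mean `t`; it is a `tsum`, hence `0`
when the expectation does not exist. -/
noncomputable def poissonMean (t : ℝ) (u : ℕ → ℝ) : ℝ := ∑' k, poissonWeight t k * u k

lemma poissonWeight_nonneg {t : ℝ} (ht : 0 ≤ t) (k : ℕ) : 0 ≤ poissonWeight t k := by
  unfold poissonWeight
  positivity

lemma hasSum_poissonWeight_mul_pow (t l : ℝ) :
    HasSum (fun k ↦ poissonWeight t k * l ^ k) (Real.exp (-(t * (1 - l)))) := by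
  have h := (NormedSpace.expSeries_div_hasSum_exp (t * l)).mul_left (Real.exp (-t))
  rw [← Real.exp_eq_exp_ℝ, ← Real.exp_add, show -t + t * l = -(t * (1 - l)) by ring] at h
  refine h.congr_fun fun k ↦ ?_
  rw [poissonWeight, mul_pow]
  ring

lemma hasSum_poissonWeight (t : ℝ) : HasSum (poissonWeight t) 1 := by
  simpa using hasSum_poissonWeight_mul_pow t 1

lemma succ_mul_poissonWeight_succ (t : ℝ) (k : ℕ) :
    (k + 1 : ℝ) * poissonWeight t (k + 1) = t * poissonWeight t k := by
  unfold poissonWeight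
  rw [Nat.factorial_succ]
  push_cast
  field_simp
  ring

/-- The size-bias identity `E[N u(N)] = t E[u(N + 1)]`. -/
lemma hasSum_poissonWeight_mul_cast_mul {t a : ℝ} {u : ℕ → ℝ}
    (h : HasSum (fun k ↦ poissonWeight t k * u (k + 1)) a) :
    HasSum (fun k ↦ poissonWeight t k * (k * u k)) (t * a) := by
  rw [← hasSum_nat_add_iff' 1]
  simp only [Finset.sum_range_one, Nat.cast_zero, zero_mul, mul_zero, sub_zero]
  refine (h.mul_left t).congr_fun fun k ↦ ?_
  rw [← mul_assoc t, ← succ_mul_poissonWeight_succ]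
  push_cast
  ring

lemma hasSum_poissonWeight_mul_cast (t : ℝ) :
    HasSum (fun k : ℕ ↦ poissonWeight t k * k) t := by
  simpa only [mul_one] using hasSum_poissonWeight_mul_cast_mul (t := t) (a := 1) (u := fun _ ↦ 1)
    (by simpa using hasSum_poissonWeight t)

lemma hasSum_poissonWeight_mul_sub_sq (t : ℝ) :
    HasSum (fun k : ℕ ↦ poissonWeight t k * (k - t) ^ 2) t := by
  have hmean := hasSum_poissonWeight_mul_cast t
  have hone := hasSum_poissonWeight t
  have hsq : HasSum (fun k : ℕ ↦ poissonWeight t k * (k * k)) (t * (t + 1)) :=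
    hasSum_poissonWeight_mul_cast_mul (u := fun k ↦ (k : ℝ))
      ((hmean.add hone).congr_fun fun k ↦ by push_cast; ring)
  have h := (hsq.add (hmean.mul_left (-2 * t))).add (hone.mul_left (t ^ 2))
  rw [show t * (t + 1) + -2 * t * t + t ^ 2 * 1 = t by ring] at h
  exact h.congr_fun fun k ↦ by ring

lemma poissonMean_div_const (t : ℝ) (u : ℕ → ℝ) (c : ℝ) :
    poissonMean t (fun k ↦ u k / c) = poissonMean t u / c := by
  simp only [poissonMean, mul_div_assoc', tsum_div_const]

section Bounded

variable {t : ℝ} (ht : 0 ≤ t) {u v : ℕ → ℝ} {C D : ℝ}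
include ht

lemma summable_poissonWeight_mul (hu : ∀ k, |u k| ≤ C) :
    Summable fun k ↦ poissonWeight t k * u k := by
  refine .of_norm_bounded ((hasSum_poissonWeight t).summable.mul_right C) fun k ↦ ?_
  rw [Real.norm_eq_abs, abs_mul, abs_of_nonneg (poissonWeight_nonneg ht k)]
  exact mul_le_mul_of_nonneg_left (hu k) (poissonWeight_nonneg ht k)

lemma poissonMean_add (hu : ∀ k, |u k| ≤ C) (hv : ∀ k, |v k| ≤ D) :
    poissonMean t (fun k ↦ u k + v k) = poissonMean t u + poissonMean t v := by
  simp only [poissonMean, mul_add]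
  exact (summable_poissonWeight_mul ht hu).tsum_add (summable_poissonWeight_mul ht hv)

lemma poissonMean_le_of_le_quadratic {A B : ℝ} (hu : Summable fun k ↦ poissonWeight t k * u k)
    (h : ∀ k : ℕ, u k ≤ A + B * (k - t) ^ 2) : poissonMean t u ≤ A + B * t := by
  have hquad := ((hasSum_poissonWeight t).mul_left A).add
    ((hasSum_poissonWeight_mul_sub_sq t).mul_left B)
  rw [mul_one] at hquad
  refine hasSum_le (fun k ↦ ?_) hu.hasSum hquad
  linarith [mul_le_mul_of_nonneg_left (h k) (poissonWeight_nonneg ht k)]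

/-- Chebyshev's inequality: `N` is within `δ` of its mean `t` outside an event of probability
at most `t / δ ^ 2`. -/
lemma poissonMean_le_of_le_near {a δ : ℝ} (hδ : 0 < δ) (hu : ∀ k, |u k| ≤ C)
    (hnear : ∀ k : ℕ, |k - t| < δ → u k ≤ a) (hfar : ∀ k, u k ≤ a + 1) :
    poissonMean t u ≤ a + t / δ ^ 2 := by
  rw [div_eq_inv_mul]
  refine poissonMean_le_of_le_quadratic ht (summable_poissonWeight_mul ht hu) fun k ↦ ?_
  obtain hk | hk := lt_or_ge |(k : ℝ) - t| δ
  · exact (hnear k hk).trans (le_add_of_nonneg_right (by positivity))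
  · have : 1 ≤ (δ ^ 2)⁻¹ * (k - t) ^ 2 := by
      rw [inv_mul_eq_div, one_le_div₀ (by positivity), ← sq_abs ((k : ℝ) - t)]
      gcongr
    linarith [hfar k]

end Bounded

/-- By size bias, the difference is `E[(t - N) u(N)] / t`, and `E|N - t|` is at most `√t`. -/
lemma poissonMean_sub_poissonMean_succ_le {t : ℝ} (ht : 0 < t) {u : ℕ → ℝ}
    (hu : ∀ k, |u k| ≤ 1) :
    poissonMean t u - poissonMean t (fun k ↦ u (k + 1)) ≤ 1 / √t := by
  have h₀ := (summable_poissonWeight_mul ht.le hu).hasSum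
  have h₁ := (summable_poissonWeight_mul ht.le fun k ↦ hu (k + 1)).hasSum
  have hdiff : HasSum (fun k ↦ poissonWeight t k * ((t - k) * u k))
      (t * (poissonMean t u - poissonMean t fun k ↦ u (k + 1))) := by
    rw [mul_sub]
    exact ((h₀.mul_left t).sub (hasSum_poissonWeight_mul_cast_mul h₁)).congr_fun fun k ↦ by ring
  have hs : 0 < √t := Real.sqrt_pos.mpr ht
  have hle : ∀ k : ℕ, (t - k) * u k ≤ √t / 2 + 1 / (2 * √t) * (k - t) ^ 2 := fun k ↦ by
    have hamgm : √t / 2 + 1 / (2 * √t) * (k - t) ^ 2 - |t - k|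
        = (√t - |t - k|) ^ 2 / (2 * √t) := by
      rw [← sq_abs, abs_sub_comm (k : ℝ)]
      field_simp
      ring
    have hpos : 0 ≤ (√t - |t - k|) ^ 2 / (2 * √t) := by positivity
    have habs : (t - k) * u k ≤ |t - k| := calc
      (t - k) * u k ≤ |t - k| * |u k| := (le_abs_self _).trans (abs_mul _ _).le
      _ ≤ |t - k| := mul_le_of_le_one_right (abs_nonneg _) (hu k)
    linarith
  have hmean := poissonMean_le_of_le_quadratic ht.le hdiff.summable hle
  rw [poissonMean, hdiff.tsum_eq] at hmean
  rw [le_div_iff₀ hs]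
  refine le_of_mul_le_mul_left ?_ hs
  calc √t * ((poissonMean t u - poissonMean t fun k ↦ u (k + 1)) * √t)
      = t * (poissonMean t u - poissonMean t fun k ↦ u (k + 1)) := by
        linear_combination (poissonMean t u - poissonMean t fun k ↦ u (k + 1)) *
          Real.mul_self_sqrt ht.le
    _ ≤ √t / 2 + 1 / (2 * √t) * t := hmean
    _ = √t * 1 := by
        field_simp
        linear_combination -Real.sq_sqrt ht.le

end Poisson

section ProbVec

variable {Ω : Type*} [Fintype Ω] {μ ν f : Ω → ℝ}

lemma IsProbVec.nonempty (hμ : IsProbVec μ) : Nonempty Ω := by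
  by_contra h
  rw [not_nonempty_iff] at h
  simpa using hμ.2

lemma IsProbVec.dotProduct_const (hμ : IsProbVec μ) (c : ℝ) : (μ ⬝ᵥ fun _ ↦ c) = c := by
  rw [dotProduct, ← Finset.sum_mul, hμ.2, one_mul]

lemma IsProbVec.dotProduct_mono (hμ : IsProbVec μ) {g : Ω → ℝ} (h : ∀ y, f y ≤ g y) :
    μ ⬝ᵥ f ≤ μ ⬝ᵥ g :=
  Finset.sum_le_sum fun y _ ↦ mul_le_mul_of_nonneg_left (h y) (hμ.1 y)

lemma IsProbVec.dotProduct_mem_Icc (hμ : IsProbVec μ) {a b : ℝ} (hf : ∀ y, f y ∈ Set.Icc a b) :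
    μ ⬝ᵥ f ∈ Set.Icc a b :=
  ⟨(hμ.dotProduct_const a).ge.trans (hμ.dotProduct_mono fun y ↦ (hf y).1),
    (hμ.dotProduct_mono fun y ↦ (hf y).2).trans (hμ.dotProduct_const b).le⟩

lemma IsProbVec.abs_dotProduct_le (hμ : IsProbVec μ) {g : Ω → ℝ} (hfg : ∀ y, |f y| ≤ g y) :
    |μ ⬝ᵥ f| ≤ μ ⬝ᵥ g := by
  rw [abs_le, ← dotProduct_neg]
  exact ⟨hμ.dotProduct_mono fun y ↦ (abs_le.mp (hfg y)).1,
    hμ.dotProduct_mono fun y ↦ (abs_le.mp (hfg y)).2⟩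

/-- Since `μ` and `ν` have the same mass, `f` may be replaced by `f - 1 / 2`. -/
lemma abs_dotProduct_sub_le_tvDist (hμν : ∑ y, μ y = ∑ y, ν y) (hf : ∀ y, f y ∈ Set.Icc 0 1) :
    |μ ⬝ᵥ f - ν ⬝ᵥ f| ≤ tvDist μ ν := by
  have hcenter : μ ⬝ᵥ f - ν ⬝ᵥ f = ∑ y, (μ y - ν y) * (f y - 1 / 2) := by
    simp only [mul_sub, sub_mul, Finset.sum_sub_distrib, ← Finset.sum_mul, hμν, dotProduct]
    ring
  rw [hcenter, tvDist, Finset.sum_div]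
  refine (Finset.abs_sum_le_sum_abs _ _).trans (Finset.sum_le_sum fun y _ ↦ ?_)
  have hf' : |f y - 1 / 2| ≤ 1 / 2 := abs_le.mpr ⟨by linarith [(hf y).1], by linarith [(hf y).2]⟩
  rw [abs_mul]
  exact (mul_le_mul_of_nonneg_left hf' (abs_nonneg _)).trans_eq (mul_one_div _ _)

/-- The supremum is attained at the indicator of `{y | ν y ≤ μ y}`. -/
lemma tvDist_le_of_dotProduct_sub_le (hμν : ∑ y, μ y = ∑ y, ν y) {ε : ℝ}
    (h : ∀ f : Ω → ℝ, (∀ y, f y ∈ Set.Icc 0 1) → μ ⬝ᵥ f - ν ⬝ᵥ f ≤ ε) : tvDist μ ν ≤ ε := by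
  set f : Ω → ℝ := fun y ↦ if ν y ≤ μ y then 1 else 0 with hf
  have habs : ∀ y, |μ y - ν y| = 2 * (μ y * f y - ν y * f y) - (μ y - ν y) := fun y ↦ by
    simp only [hf]
    split_ifs with hy
    · rw [abs_of_nonneg (sub_nonneg.mpr hy)]
      ring
    · rw [abs_of_nonpos (by linarith)]
      ring
  have htv : tvDist μ ν = μ ⬝ᵥ f - ν ⬝ᵥ f := by
    simp only [tvDist, habs, Finset.sum_sub_distrib, ← Finset.mul_sum, hμν, dotProduct]
    ring
  refine htv.le.trans (h f fun y ↦ ?_)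
  simp only [hf]
  split_ifs <;> simp

lemma sum_abs_vecMul_le {P : Matrix Ω Ω ℝ} (hP : IsStochastic P) (μ : Ω → ℝ) :
    ∑ y, |(μ ᵥ* P) y| ≤ ∑ x, |μ x| := calc
  ∑ y, |(μ ᵥ* P) y| ≤ ∑ y, ∑ x, |μ x| * P x y := by
    refine Finset.sum_le_sum fun y _ ↦ (Finset.abs_sum_le_sum_abs _ _).trans_eq ?_
    simp only [abs_mul, abs_of_nonneg (hP.1 _ _)]
  _ = ∑ x, |μ x| := by
    rw [Finset.sum_comm]
    simp only [← Finset.mul_sum, hP.2, mul_one]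

end ProbVec

section Kernel

variable {Ω : Type*} [Fintype Ω] {P M Q : Matrix Ω Ω ℝ} {π f : Ω → ℝ} {ε δ : ℝ}

lemma IsStochastic.isProbVec (hP : IsStochastic P) (x : Ω) : IsProbVec (P x) :=
  ⟨hP.1 x, hP.2 x⟩

lemma IsStochastic.pow [DecidableEq Ω] (hP : IsStochastic P) (k : ℕ) : IsStochastic (P ^ k) :=
  mem_rowStochastic_iff_sum.mp (pow_mem (mem_rowStochastic_iff_sum.mpr hP) k)

lemma IsStochastic.abs_apply_le_one (hP : IsStochastic P) (x y : Ω) : |P x y| ≤ 1 := by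
  rw [abs_of_nonneg (hP.1 x y), ← hP.2 x]
  exact Finset.single_le_sum (fun z _ ↦ hP.1 x z) (Finset.mem_univ y)

/-- The chain with transition kernel `M` is within total-variation distance `ε` of `π`, whatever
its starting point. -/
def MixedWithin (M : Matrix Ω Ω ℝ) (π : Ω → ℝ) (ε : ℝ) : Prop := ∀ x, tvDist (M x) π ≤ ε

lemma MixedWithin.mono (hεδ : ε ≤ δ) (h : MixedWithin M π ε) : MixedWithin M π δ :=
  fun x ↦ (h x).trans hεδ

lemma MixedWithin.nonneg (hπ : IsProbVec π) (h : MixedWithin M π ε) : 0 ≤ ε :=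
  have ⟨x⟩ := hπ.nonempty
  le_trans (by unfold tvDist; positivity) (h x)

lemma MixedWithin.mul_left (hQ : IsStochastic Q) (h : MixedWithin M π ε) :
    MixedWithin (Q * M) π ε := fun x ↦ by
  have hrow : ∀ y, (Q * M) x y - π y = Q x ⬝ᵥ fun z ↦ M z y - π y := fun y ↦ by
    simp only [dotProduct, mul_sub, Finset.sum_sub_distrib, ← Finset.sum_mul, hQ.2 x, one_mul,
      mul_apply]
  calc tvDist ((Q * M) x) π ≤ (∑ y, Q x ⬝ᵥ fun z ↦ |M z y - π y|) / 2 := by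
        unfold tvDist
        gcongr with y
        rw [hrow y]
        refine (Finset.abs_sum_le_sum_abs _ _).trans_eq ?_
        simp only [abs_mul, abs_of_nonneg (hQ.1 x _), dotProduct]
    _ = Q x ⬝ᵥ fun z ↦ tvDist (M z) π := by
        simp only [dotProduct, tvDist, mul_div_assoc', Finset.mul_sum]
        rw [Finset.sum_comm, Finset.sum_div]
    _ ≤ ε := ((hQ.isProbVec x).dotProduct_mono h).trans_eq ((hQ.isProbVec x).dotProduct_const ε)

lemma MixedWithin.abs_mulVec_sub_le (hM : IsStochastic M) (hπ : IsProbVec π)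
    (h : MixedWithin M π ε) (hf : ∀ y, f y ∈ Set.Icc 0 1) (x : Ω) :
    |(M *ᵥ f) x - π ⬝ᵥ f| ≤ ε :=
  (abs_dotProduct_sub_le_tvDist (by rw [hM.2, hπ.2]) hf).trans (h x)

lemma mixedWithin_of_mulVec_sub_le (hM : IsStochastic M) (hπ : IsProbVec π)
    (h : ∀ f : Ω → ℝ, (∀ y, f y ∈ Set.Icc 0 1) → ∀ x, (M *ᵥ f) x - π ⬝ᵥ f ≤ ε) :
    MixedWithin M π ε :=
  fun x ↦ tvDist_le_of_dotProduct_sub_le (by rw [hM.2, hπ.2]) fun f hf ↦ h f hf x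

lemma MixedWithin.sum_abs_vecMul_le (h : MixedWithin M π ε) {μ : Ω → ℝ} (hμ : ∑ x, μ x = 0) :
    ∑ y, |(μ ᵥ* M) y| ≤ 2 * ε * ∑ x, |μ x| := by
  have hcenter : ∀ y, (μ ᵥ* M) y = ∑ x, μ x * (M x y - π y) := fun y ↦ by
    simp only [mul_sub, Finset.sum_sub_distrib, ← Finset.sum_mul, hμ, zero_mul, sub_zero, vecMul,
      dotProduct]
  calc ∑ y, |(μ ᵥ* M) y| ≤ ∑ y, ∑ x, |μ x| * |M x y - π y| := by
        refine Finset.sum_le_sum fun y _ ↦ ?_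
        rw [hcenter y]
        exact (Finset.abs_sum_le_sum_abs _ _).trans_eq (by simp only [abs_mul])
    _ = ∑ x, |μ x| * (2 * tvDist (M x) π) := by
        rw [Finset.sum_comm]
        refine Finset.sum_congr rfl fun x _ ↦ ?_
        rw [← Finset.mul_sum, tvDist, mul_div_cancel₀ _ two_ne_zero]
    _ ≤ ∑ x, |μ x| * (2 * ε) := by
        gcongr with x
        exact h x
    _ = 2 * ε * ∑ x, |μ x| := by rw [← Finset.sum_mul, mul_comm]

variable [DecidableEq Ω]

/-- The transition kernel `H_t` of the continuous-time chain. -/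
noncomputable def heatKernel (P : Matrix Ω Ω ℝ) (t : ℝ) : Matrix Ω Ω ℝ :=
  of fun x y ↦ poissonMean t fun k ↦ (P ^ k) x y

/-- The transition kernel `(P ^ m + P ^ (m + 1)) / 2` of the averaged chain. -/
noncomputable def aveKernel (P : Matrix Ω Ω ℝ) (m : ℕ) : Matrix Ω Ω ℝ :=
  (2 : ℝ)⁻¹ • (P ^ m + P ^ (m + 1))

lemma heatKernel_mulVec (hP : IsStochastic P) {t : ℝ} (ht : 0 ≤ t) (f : Ω → ℝ) (x : Ω) :
    (heatKernel P t *ᵥ f) x = poissonMean t fun k ↦ (P ^ k *ᵥ f) x := by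
  have hsum := fun y ↦
    (summable_poissonWeight_mul ht fun k ↦ (hP.pow k).abs_apply_le_one x y).mul_right (f y)
  simp only [mulVec, dotProduct, heatKernel, of_apply, poissonMean, ← tsum_mul_right]
  rw [← Summable.tsum_finsetSum fun y _ ↦ hsum y]
  simp only [Finset.mul_sum, mul_assoc]

lemma vecMul_heatKernel (hP : IsStochastic P) {t : ℝ} (ht : 0 ≤ t) (μ : Ω → ℝ) (y : Ω) :
    (μ ᵥ* heatKernel P t) y = poissonMean t fun k ↦ (μ ᵥ* P ^ k) y := by
  have hsum := fun x ↦
    (summable_poissonWeight_mul ht fun k ↦ (hP.pow k).abs_apply_le_one x y).mul_left (μ x)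
  simp only [vecMul, dotProduct, heatKernel, of_apply, poissonMean, ← tsum_mul_left]
  rw [← Summable.tsum_finsetSum fun x _ ↦ hsum x]
  simp only [Finset.mul_sum, mul_left_comm]

lemma aveKernel_add (P : Matrix Ω Ω ℝ) (m j : ℕ) : aveKernel P (m + j) = P ^ j * aveKernel P m := by
  simp only [aveKernel, mul_smul_comm, mul_add, ← pow_add]
  congr 3 <;> ring

lemma aveKernel_mulVec_apply (P : Matrix Ω Ω ℝ) (m : ℕ) (f : Ω → ℝ) (x : Ω) :
    (aveKernel P m *ᵥ f) x = ((P ^ m *ᵥ f) x + (P ^ (m + 1) *ᵥ f) x) / 2 := by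
  rw [aveKernel, smul_mulVec, add_mulVec, Pi.smul_apply, Pi.add_apply, smul_eq_mul,
    inv_mul_eq_div]

lemma IsStochastic.aveKernel (hP : IsStochastic P) (m : ℕ) : IsStochastic (aveKernel P m) := by
  rw [_root_.aveKernel, smul_add]
  exact mem_rowStochastic_iff_sum.mp (convex_rowStochastic
    (mem_rowStochastic_iff_sum.mpr (hP.pow m)) (mem_rowStochastic_iff_sum.mpr (hP.pow (m + 1)))
    (by norm_num) (by norm_num) (by norm_num))

lemma IsStochastic.heatKernel (hP : IsStochastic P) {t : ℝ} (ht : 0 ≤ t) :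
    IsStochastic (heatKernel P t) := by
  refine ⟨fun x y ↦ tsum_nonneg fun k ↦ mul_nonneg (poissonWeight_nonneg ht k) ((hP.pow k).1 x y),
    fun x ↦ ?_⟩
  have h := heatKernel_mulVec hP ht (fun _ ↦ 1) x
  simpa only [mulVec, dotProduct, mul_one, (hP.pow _).2, poissonMean,
    (hasSum_poissonWeight t).tsum_eq] using h

lemma MixedWithin.aveKernel_of_le (hP : IsStochastic P) {m k : ℕ} (hmk : m ≤ k)
    (h : MixedWithin (aveKernel P m) π ε) : MixedWithin (aveKernel P k) π ε := by
  obtain ⟨j, rfl⟩ := Nat.exists_eq_add_of_le hmk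
  rw [aveKernel_add]
  exact h.mul_left (hP.pow j)

lemma deltaMass_vecMul (M : Matrix Ω Ω ℝ) (x y : Ω) : (deltaMass x ᵥ* M) y = M x y := by
  simp [vecMul, dotProduct, deltaMass]

lemma contDistMax_le_iff [Nonempty Ω] (P : Matrix Ω Ω ℝ) (π : Ω → ℝ) (t ε : ℝ) :
    contDistMax P π t ≤ ε ↔ MixedWithin (heatKernel P t) π ε := by
  simp only [contDistMax, contDist, deltaMass_vecMul, MixedWithin]
  exact ciSup_le_iff (Set.finite_range _).bddAbove

lemma aveDistMax_le_iff [Nonempty Ω] (P : Matrix Ω Ω ℝ) (π : Ω → ℝ) (m : ℕ) (ε : ℝ) :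
    aveDistMax P π m ≤ ε ↔ MixedWithin (aveKernel P m) π ε := by
  have hrow : ∀ x, (fun y ↦ ((P ^ m) x y + (P ^ (m + 1)) x y) / 2) = aveKernel P m x := fun x ↦ by
    funext y
    rw [aveKernel, Matrix.smul_apply, Matrix.add_apply, smul_eq_mul, inv_mul_eq_div]
  simp only [aveDistMax, aveDist, deltaMass_vecMul, Nat.floor_natCast, hrow, MixedWithin]
  exact ciSup_le_iff (Set.finite_range _).bddAbove

end Kernel

section AveToCont

variable {Ω : Type*} [Fintype Ω] [DecidableEq Ω] {P : Matrix Ω Ω ℝ} {π : Ω → ℝ} {ε : ℝ}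

/-- A Poisson time `N` of mean `s` exceeds `m` with high probability, and at time `N` the chain
differs little from the averaged chain because `N` and `N + 1` are close in law. -/
theorem MixedWithin.heatKernel_of_aveKernel (hP : IsStochastic P) (hπ : IsProbVec π) {m : ℕ}
    {s : ℝ} (hms : m < s) (h : MixedWithin (aveKernel P m) π ε) :
    MixedWithin (heatKernel P s) π (ε + s / (s - m) ^ 2 + 1 / (2 * √s)) := by
  have hs : 0 < s := m.cast_nonneg.trans_lt hms
  refine mixedWithin_of_mulVec_sub_le (hP.heatKernel hs.le) hπ fun f hf x ↦ ?_
  set b : ℕ → ℝ := fun k ↦ (P ^ k *ᵥ f) x with hb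
  have habs {r : ℝ} (hr : r ∈ Set.Icc 0 1) : |r| ≤ 1 := abs_le.mpr ⟨by linarith [hr.1], hr.2⟩
  have hb₁ : ∀ k, |b k| ≤ 1 := fun k ↦ habs (((hP.pow k).isProbVec x).dotProduct_mem_Icc hf)
  have ha : ∀ k, (aveKernel P k *ᵥ f) x ∈ Set.Icc 0 1 := fun k ↦
    ((hP.aveKernel k).isProbVec x).dotProduct_mem_Icc hf
  have hπf : π ⬝ᵥ f ∈ Set.Icc 0 1 := hπ.dotProduct_mem_Icc hf
  have hε : 0 ≤ ε := h.nonneg hπ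
  have hsum : (poissonMean s b + poissonMean s fun k ↦ b (k + 1)) / 2
      ≤ (π ⬝ᵥ f + ε) + s / (s - m) ^ 2 := by
    rw [← poissonMean_add hs.le hb₁ fun k ↦ hb₁ (k + 1), ← poissonMean_div_const]
    simp only [hb, ← aveKernel_mulVec_apply]
    refine poissonMean_le_of_le_near hs.le (sub_pos.mpr hms) (fun k ↦ habs (ha k)) (fun k hk ↦ ?_)
      fun k ↦ by linarith [(ha k).2, hπf.1]
    have hmk : m ≤ k := by
      rw [← Nat.cast_le (α := ℝ)]
      linarith [(abs_lt.mp hk).1]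
    linarith [(abs_le.mp ((h.aveKernel_of_le hP hmk).abs_mulVec_sub_le (hP.aveKernel k) hπ hf x)).2]
  have hdiff := poissonMean_sub_poissonMean_succ_le hs hb₁
  rw [heatKernel_mulVec hP hs.le, mul_comm 2, ← div_div]
  linarith

end AveToCont

section Energy

variable {E : Type*} [NormedAddCommGroup E] [InnerProductSpace ℝ E]

/-- A quadratic functional which dominates `‖a m‖ ^ 2` for all `w ≤ m ≤ w + N`, see
`norm_sq_le_telescopicEnergy`. The parameter `r` balances the differences of consecutive terms
against their sums. -/
noncomputable def telescopicEnergy (r : ℝ) (w N : ℕ) (a : ℕ → E) : ℝ :=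
  ‖a (w + N)‖ ^ 2 + ∑ i ∈ Finset.range N,
    (r / 2 * ‖a (w + i) - a (w + i + 1)‖ ^ 2 + 1 / (2 * r) * ‖a (w + i) + a (w + i + 1)‖ ^ 2)

/-- AM-GM applied to `‖x‖ ^ 2 - ‖y‖ ^ 2 = ⟪x - y, x + y⟫`. -/
lemma norm_sq_sub_norm_sq_le {r : ℝ} (hr : 0 < r) (x y : E) :
    ‖x‖ ^ 2 - ‖y‖ ^ 2 ≤ r / 2 * ‖x - y‖ ^ 2 + 1 / (2 * r) * ‖x + y‖ ^ 2 := by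
  have hinner : ‖x‖ ^ 2 - ‖y‖ ^ 2 = inner ℝ (x - y) (x + y) := by
    simp only [inner_sub_left, inner_add_right, real_inner_self_eq_norm_sq, real_inner_comm x y]
    ring
  have hsquare : 0 ≤ (r * ‖x - y‖ - ‖x + y‖) ^ 2 / (2 * r) := by positivity
  have hexpand : (r * ‖x - y‖ - ‖x + y‖) ^ 2 / (2 * r)
      = r / 2 * ‖x - y‖ ^ 2 + 1 / (2 * r) * ‖x + y‖ ^ 2 - ‖x - y‖ * ‖x + y‖ := by
    field_simp
    ring
  linarith [real_inner_le_norm (x - y) (x + y)]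

lemma norm_sq_le_telescopicEnergy {r : ℝ} (hr : 0 < r) (a : ℕ → E) {w N m : ℕ} (hwm : w ≤ m)
    (hmN : m ≤ w + N) : ‖a m‖ ^ 2 ≤ telescopicEnergy r w N a := by
  obtain ⟨j, rfl⟩ := Nat.exists_eq_add_of_le hwm
  induction N, Nat.le_of_add_le_add_left hmN using Nat.le_induction with
  | base => exact le_add_of_nonneg_right (by positivity)
  | succ N hjN ih =>
    refine (ih (by gcongr)).trans ?_
    rw [telescopicEnergy, telescopicEnergy, Finset.sum_range_succ, ← add_assoc w N 1]
    linarith [norm_sq_sub_norm_sq_le hr (a (w + N)) (a (w + N + 1))]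

lemma sum_telescopicEnergy_repr {ι : Type*} [Fintype ι] (b : OrthonormalBasis ι ℝ E)
    (r : ℝ) (w N : ℕ) (a : ℕ → E) :
    ∑ i, telescopicEnergy r w N (fun m ↦ b.repr (a m) i) = telescopicEnergy r w N a := by
  have hnorm : ∀ x, ∑ i, ‖b.repr x i‖ ^ 2 = ‖x‖ ^ 2 := fun x ↦ by
    rw [← EuclideanSpace.norm_sq_eq, b.repr.norm_map]
  have hsub : ∀ x y i, b.repr x i - b.repr y i = b.repr (x - y) i := fun x y i ↦ by simp
  have hadd : ∀ x y i, b.repr x i + b.repr y i = b.repr (x + y) i := fun x y i ↦ by simp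
  simp only [telescopicEnergy, Finset.sum_add_distrib, hsub, hadd, hnorm]
  rw [Finset.sum_comm, Finset.sum_comm (s := Finset.univ) (t := Finset.range N)]
  simp only [← Finset.mul_sum, hnorm]

end Energy

section Geometric

lemma pow_mul_one_sub_le {x : ℝ} (hx₀ : 0 ≤ x) (hx₁ : x ≤ 1) (w : ℕ) :
    x ^ w * (1 - x) ≤ 1 / (w + 1) := by
  have hgeom : (w + 1 : ℝ) * x ^ w ≤ ∑ i ∈ Finset.range (w + 1), x ^ i := by
    simpa using Finset.card_nsmul_le_sum (Finset.range (w + 1)) (fun i ↦ x ^ i) (x ^ w)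
      fun i hi ↦ pow_le_pow_of_le_one hx₀ hx₁ (Finset.mem_range_succ_iff.mp hi)
  rw [le_div_iff₀ (by positivity)]
  calc x ^ w * (1 - x) * (w + 1) = (w + 1) * x ^ w * (1 - x) := by ring
    _ ≤ (∑ i ∈ Finset.range (w + 1), x ^ i) * (1 - x) :=
        mul_le_mul_of_nonneg_right hgeom (sub_nonneg.mpr hx₁)
    _ = 1 - x ^ (w + 1) := geom_sum_mul_neg x (w + 1)
    _ ≤ 1 := sub_le_self _ (by positivity)

variable {l r : ℝ}

lemma telescopicEnergy_const_mul_pow (r : ℝ) (w N : ℕ) (c l : ℝ) :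
    telescopicEnergy r w N (fun m ↦ c * l ^ m) = c ^ 2 * (l ^ 2) ^ w * ((l ^ 2) ^ N
      + (∑ i ∈ Finset.range N, (l ^ 2) ^ i) *
        (r / 2 * (1 - l) ^ 2 + 1 / (2 * r) * (1 + l) ^ 2)) := by
  simp only [telescopicEnergy, Real.norm_eq_abs, sq_abs, mul_add, Finset.sum_mul, Finset.mul_sum,
    ← Finset.sum_add_distrib]
  congr 1
  · ring
  · exact Finset.sum_congr rfl fun i _ ↦ by ring

/-- Of the two terms in the bracket, the first has a double zero at `l = 1`, and the second gains
one there from `1 ≤ r * (1 - l)`. -/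
lemma sq_mul_bracket_le (hl : -1 ≤ l) (hl₁ : l ≤ 1) (hr : 0 < r) (hrl : 1 ≤ r * (1 - l)) :
    ((1 + l) / 2) ^ 2 * (r / 2 * (1 - l) ^ 2 + 1 / (2 * r) * (1 + l) ^ 2)
      ≤ 5 / 8 * r * (1 - l ^ 2) ^ 2 := by
  have hinv : 1 / (2 * r) ≤ r * (1 - l) ^ 2 / 2 := by
    rw [div_le_div_iff₀ (by positivity) two_pos]
    nlinarith
  have hl₂ : (1 + l) ^ 2 ≤ 4 := by nlinarith
  calc ((1 + l) / 2) ^ 2 * (r / 2 * (1 - l) ^ 2 + 1 / (2 * r) * (1 + l) ^ 2)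
      ≤ ((1 + l) / 2) ^ 2 * (r / 2 * (1 - l) ^ 2 + r * (1 - l) ^ 2 / 2 * 4) := by gcongr
    _ = 5 / 8 * r * (1 - l ^ 2) ^ 2 := by ring

lemma telescopicEnergy_eigenvalue_le (hl : -1 ≤ l) (hr : 0 < r) (hrl : 1 ≤ r * (1 - l))
    (w N : ℕ) (v : ℝ) :
    telescopicEnergy r w N (fun m ↦ (1 + l) / 2 * v * l ^ m) ≤ 2 * r / (w + 1) * v ^ 2 := by
  have hl₁ : l ≤ 1 := by nlinarith
  have hone_sub : 0 ≤ 1 - l ^ 2 := by nlinarith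
  have hlast : ((1 + l) / 2) ^ 2 * (l ^ 2) ^ N ≤ r * (1 - l ^ 2) / 2 := calc
    ((1 + l) / 2) ^ 2 * (l ^ 2) ^ N ≤ ((1 + l) / 2) ^ 2 * 1 := by
      gcongr
      exact pow_le_one₀ (sq_nonneg l) (by linarith)
    _ ≤ r * (1 - l ^ 2) / 2 := by nlinarith
  have hgeom : (∑ i ∈ Finset.range N, (l ^ 2) ^ i) * (1 - l ^ 2) ≤ 1 :=
    (geom_sum_mul_neg _ _).trans_le (sub_le_self _ (by positivity))
  set S := ∑ i ∈ Finset.range N, (l ^ 2) ^ i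
  set B := r / 2 * (1 - l) ^ 2 + 1 / (2 * r) * (1 + l) ^ 2
  have hS₀ : 0 ≤ S := by positivity
  calc telescopicEnergy r w N (fun m ↦ (1 + l) / 2 * v * l ^ m)
      = v ^ 2 * (l ^ 2) ^ w * (((1 + l) / 2) ^ 2 * (l ^ 2) ^ N + S * (((1 + l) / 2) ^ 2 * B)) := by
        rw [telescopicEnergy_const_mul_pow]
        ring
    _ ≤ v ^ 2 * (l ^ 2) ^ w * (r * (1 - l ^ 2) / 2 + S * (5 / 8 * r * (1 - l ^ 2) ^ 2)) := by
        have hbracket := mul_le_mul_of_nonneg_left (sq_mul_bracket_le hl hl₁ hr hrl) hS₀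
        exact mul_le_mul_of_nonneg_left (add_le_add hlast hbracket) (by positivity)
    _ = v ^ 2 * r * ((l ^ 2) ^ w * (1 - l ^ 2)) * (1 / 2 + 5 / 8 * (S * (1 - l ^ 2))) := by ring
    _ ≤ v ^ 2 * r * (1 / (w + 1)) * (1 / 2 + 5 / 8 * 1) := by
        gcongr
        exact pow_mul_one_sub_le (sq_nonneg l) (by linarith) w
    _ ≤ 2 * r / (w + 1) * v ^ 2 := by
        have hfactor : 0 ≤ v ^ 2 * r * (1 / (w + 1)) := by positivity
        linarith [show 2 * r / (w + 1) * v ^ 2 = 2 * (v ^ 2 * r * (1 / (w + 1))) by ring]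

end Geometric

section Spectral

open Module.End

variable {E : Type*} [NormedAddCommGroup E] [InnerProductSpace ℝ E] [FiniteDimensional ℝ E]

theorem telescopicEnergy_pow_average_le {T : E →ₗ[ℝ] E} (hT : T.IsSymmetric) {r : ℝ} (hr : 0 < r)
    (hspec : ∀ l, HasEigenvalue T l → -1 ≤ l ∧ 1 ≤ r * (1 - l)) (w N : ℕ) (v : E) :
    telescopicEnergy r w N (fun m ↦ (2 : ℝ)⁻¹ • ((T ^ m) v + (T ^ (m + 1)) v))
      ≤ 2 * r / (w + 1) * ‖v‖ ^ 2 := by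
  set b := hT.eigenvectorBasis rfl
  set l := hT.eigenvalues rfl
  have hpow : ∀ m i, b.repr ((T ^ m) v) i = l i ^ m * b.repr v i := fun m i ↦ by
    induction m with
    | zero => simp
    | succ m ih =>
      rw [pow_succ', Module.End.mul_apply, hT.eigenvectorBasis_apply_self_apply, ih]
      simp only [RCLike.ofReal_real_eq_id, id, pow_succ']
      ring
  have hcoord : ∀ m i, b.repr ((2 : ℝ)⁻¹ • ((T ^ m) v + (T ^ (m + 1)) v)) i
      = (1 + l i) / 2 * b.repr v i * l i ^ m := fun m i ↦ by
    simp only [map_smul, map_add, PiLp.smul_apply, PiLp.add_apply, hpow, smul_eq_mul]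
    ring
  calc telescopicEnergy r w N (fun m ↦ (2 : ℝ)⁻¹ • ((T ^ m) v + (T ^ (m + 1)) v))
      = ∑ i, telescopicEnergy r w N (fun m ↦ (1 + l i) / 2 * b.repr v i * l i ^ m) := by
        simp only [← sum_telescopicEnergy_repr b, hcoord]
    _ ≤ ∑ i, 2 * r / (w + 1) * b.repr v i ^ 2 := by
        refine Finset.sum_le_sum fun i _ ↦ ?_
        obtain ⟨hl, hrl⟩ := hspec (l i) (hT.hasEigenvalue_eigenvalues rfl i)
        exact telescopicEnergy_eigenvalue_le hl hr hrl w N _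
    _ = 2 * r / (w + 1) * ‖v‖ ^ 2 := by
        rw [← Finset.mul_sum, ← b.repr.norm_map v, EuclideanSpace.norm_sq_eq]
        simp only [Real.norm_eq_abs, sq_abs]

end Spectral

section Symmetrization

variable {Ω : Type*} [Fintype Ω] {Q : Matrix Ω Ω ℝ} {π : Ω → ℝ}

/-- The matrix `D ^ (1 / 2) Q D ^ (-1 / 2)`, `D = diagonal π`, which is symmetric when `(Q, π)` is
reversible. Columns `y` with `π y = 0` vanish since `x / 0 = 0`. -/
noncomputable def symmetrization (Q : Matrix Ω Ω ℝ) (π : Ω → ℝ) : Matrix Ω Ω ℝ :=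
  of fun x y ↦ √(π x) * Q x y / √(π y)

lemma IsReversible.isHermitian_symmetrization (hπ : ∀ x, 0 ≤ π x) (h : IsReversible Q π) :
    (symmetrization Q π).IsHermitian := by
  refine IsHermitian.ext fun x y ↦ ?_
  simp only [symmetrization, of_apply, star_trivial]
  rcases (hπ x).eq_or_lt with hx | hx
  · simp [← hx]
  rcases (hπ y).eq_or_lt with hy | hy
  · simp [← hy]
  rw [div_eq_div_iff (Real.sqrt_pos.mpr hx).ne' (Real.sqrt_pos.mpr hy).ne', mul_right_comm,
    mul_right_comm √(π x), Real.mul_self_sqrt hx.le, Real.mul_self_sqrt hy.le, h y x]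

variable [DecidableEq Ω]

/-- The isometric embedding `f ↦ √π f` of `L²(π)` into Euclidean space. -/
noncomputable def sqrtWeighted (π f : Ω → ℝ) : EuclideanSpace ℝ Ω :=
  WithLp.toLp 2 (diagonal (fun y ↦ √(π y)) *ᵥ f)

lemma sqrtWeighted_apply (π f : Ω → ℝ) (y : Ω) : sqrtWeighted π f y = √(π y) * f y :=
  mulVec_diagonal _ f y

lemma norm_sqrtWeighted_apply_sq (hπ : ∀ x, 0 ≤ π x) (f : Ω → ℝ) (y : Ω) :
    ‖sqrtWeighted π f y‖ ^ 2 = π y * f y ^ 2 := by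
  simp only [sqrtWeighted_apply, Real.norm_eq_abs, sq_abs, mul_pow, Real.sq_sqrt (hπ y)]

lemma norm_sqrtWeighted_sq (hπ : ∀ x, 0 ≤ π x) (f : Ω → ℝ) :
    ‖sqrtWeighted π f‖ ^ 2 = ∑ y, π y * f y ^ 2 := by
  simp only [EuclideanSpace.norm_sq_eq, norm_sqrtWeighted_apply_sq hπ]

lemma IsReversible.symmetrization_mul_diagonal (hπ : ∀ x, 0 ≤ π x) (h : IsReversible Q π) :
    symmetrization Q π * diagonal (fun y ↦ √(π y)) = diagonal (fun y ↦ √(π y)) * Q := by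
  ext x y
  simp only [mul_diagonal, diagonal_mul, symmetrization, of_apply]
  rcases (hπ y).eq_or_lt with hy | hy
  · have hx : π x * Q x y = 0 := by rw [h x y, ← hy, zero_mul]
    rcases mul_eq_zero.mp hx with hx | hx <;> simp [← hy, hx]
  · exact div_mul_cancel₀ _ (Real.sqrt_pos.mpr hy).ne'

lemma IsReversible.toEuclideanLin_pow_sqrtWeighted (hπ : ∀ x, 0 ≤ π x) (h : IsReversible Q π)
    (m : ℕ) (f : Ω → ℝ) :
    (toEuclideanLin (symmetrization Q π) ^ m) (sqrtWeighted π f)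
      = sqrtWeighted π (Q ^ m *ᵥ f) := by
  induction m with
  | zero => simp
  | succ m ih =>
    rw [pow_succ', Module.End.mul_apply, ih, sqrtWeighted, sqrtWeighted, toLpLin_toLp, toLin'_apply,
      mulVec_mulVec, h.symmetrization_mul_diagonal hπ, ← mulVec_mulVec, mulVec_mulVec _ Q,
      ← pow_succ']

/-- Nonzero eigenvalues of the symmetrization are eigenvalues of `Q`, even where `π` vanishes. -/
lemma IsReversible.exists_vecMul_eq_smul_of_hasEigenvalue (hπ : ∀ x, 0 ≤ π x)
    (h : IsReversible Q π) {l : ℝ} (hl : l ≠ 0)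
    (hT : Module.End.HasEigenvalue (toEuclideanLin (symmetrization Q π)) l) :
    ∃ μ ≠ 0, μ ᵥ* Q = l • μ := by
  obtain ⟨e, he⟩ := hT.exists_hasEigenvector
  have hmulVec : symmetrization Q π *ᵥ e.ofLp = l • e.ofLp :=
    congrArg WithLp.ofLp he.apply_eq_smul
  have hvecMul : e.ofLp ᵥ* symmetrization Q π = l • e.ofLp := by
    rw [← hmulVec, ← mulVec_transpose]
    exact congrArg (· *ᵥ e.ofLp) (h.isHermitian_symmetrization hπ)
  refine ⟨e.ofLp ᵥ* diagonal fun y ↦ √(π y), fun hzero ↦ he.2 ?_, ?_⟩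
  · have hez : ∀ y, e.ofLp y * √(π y) = 0 := fun y ↦ by
      rw [← vecMul_diagonal e.ofLp fun y ↦ √(π y), hzero, Pi.zero_apply]
    have hle : l • e.ofLp = 0 := by
      rw [← hvecMul]
      funext y
      simp only [vecMul, dotProduct, symmetrization, of_apply, mul_div_assoc, ← mul_assoc, hez,
        zero_mul, Finset.sum_const_zero, Pi.zero_apply]
    exact WithLp.ofLp_injective 2 ((smul_eq_zero.mp hle).resolve_left hl)
  · rw [vecMul_vecMul, ← h.symmetrization_mul_diagonal hπ, ← vecMul_vecMul, hvecMul, smul_vecMul]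

theorem IsReversible.sum_mul_sq_aveKernel_le (hπ : ∀ x, 0 ≤ π x) (h : IsReversible Q π) {r : ℝ}
    (hr : 1 ≤ r)
    (hspec : ∀ (l : ℝ) (μ : Ω → ℝ), l ≠ 0 → μ ≠ 0 → μ ᵥ* Q = l • μ → -1 ≤ l ∧ 1 ≤ r * (1 - l))
    {w : ℕ} {m : Ω → ℕ} (hm : ∀ y, w ≤ m y) (g : Ω → ℝ) :
    ∑ y, π y * (aveKernel Q (m y) *ᵥ g) y ^ 2 ≤ 2 * r / (w + 1) * ∑ y, π y * g y ^ 2 := by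
  have hr₀ : 0 < r := one_pos.trans_le hr
  have hspec' : ∀ l, Module.End.HasEigenvalue (toEuclideanLin (symmetrization Q π)) l →
      -1 ≤ l ∧ 1 ≤ r * (1 - l) := fun l hT ↦ by
    rcases eq_or_ne l 0 with rfl | hl
    · exact ⟨by norm_num, by simpa using hr⟩
    · obtain ⟨μ, hμ, hμQ⟩ := h.exists_vecMul_eq_smul_of_hasEigenvalue hπ hl hT
      exact hspec l μ hl hμ hμQ
  set T := toEuclideanLin (symmetrization Q π)
  set a : ℕ → EuclideanSpace ℝ Ω := fun k ↦
    (2 : ℝ)⁻¹ • ((T ^ k) (sqrtWeighted π g) + (T ^ (k + 1)) (sqrtWeighted π g)) with ha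
  have ha_apply : ∀ k y, a k y = sqrtWeighted π (aveKernel Q k *ᵥ g) y := fun k y ↦ by
    simp only [ha, T, h.toEuclideanLin_pow_sqrtWeighted hπ, PiLp.smul_apply, PiLp.add_apply,
      sqrtWeighted_apply, smul_eq_mul, aveKernel_mulVec_apply]
    ring
  set N := Finset.univ.sup m
  calc ∑ y, π y * (aveKernel Q (m y) *ᵥ g) y ^ 2 = ∑ y, ‖a (m y) y‖ ^ 2 := by
        simp only [ha_apply, norm_sqrtWeighted_apply_sq hπ]
    _ ≤ ∑ y, telescopicEnergy r w N fun k ↦ a k y := Finset.sum_le_sum fun y _ ↦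
        norm_sq_le_telescopicEnergy hr₀ (fun k ↦ a k y) (hm y)
          ((Finset.le_sup (Finset.mem_univ y)).trans (Nat.le_add_left N w))
    _ = telescopicEnergy r w N a := sum_telescopicEnergy_repr (EuclideanSpace.basisFun Ω ℝ) r w N a
    _ ≤ 2 * r / (w + 1) * ‖sqrtWeighted π g‖ ^ 2 := telescopicEnergy_pow_average_le
        (isSymmetric_toEuclideanLin_iff.mpr (h.isHermitian_symmetrization hπ)) hr₀ hspec' w N _
    _ = 2 * r / (w + 1) * ∑ y, π y * g y ^ 2 := by rw [norm_sqrtWeighted_sq hπ]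

end Symmetrization

section MaximalInequality

variable {Ω : Type*} [Fintype Ω] {P Q : Matrix Ω Ω ℝ} {π μ g : Ω → ℝ} {l t L : ℝ}

lemma sum_abs_pos (hμ : μ ≠ 0) : 0 < ∑ x, |μ x| := by
  obtain ⟨x, hx⟩ := Function.ne_iff.mp hμ
  exact Finset.sum_pos' (fun _ _ ↦ abs_nonneg _) ⟨x, Finset.mem_univ x, abs_pos.mpr hx⟩

lemma IsStochastic.abs_le_one_of_vecMul_eq_smul (hP : IsStochastic P) (hμ : μ ≠ 0)
    (h : μ ᵥ* P = l • μ) : |l| ≤ 1 := by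
  refine le_of_mul_le_mul_right ?_ (sum_abs_pos hμ)
  simpa only [h, Pi.smul_apply, smul_eq_mul, abs_mul, ← Finset.mul_sum, one_mul]
    using sum_abs_vecMul_le hP μ

lemma IsReversible.vecMul_eq (hP : IsStochastic P) (h : IsReversible P π) : π ᵥ* P = π := by
  funext y
  simp only [vecMul, dotProduct, h _ y, ← Finset.mul_sum, hP.2 y, mul_one]

/-- The matrix `P` minus its stationary part: functions are centered with respect to `π`. -/
def centered (P : Matrix Ω Ω ℝ) (π : Ω → ℝ) : Matrix Ω Ω ℝ := of fun x y ↦ P x y - π y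

lemma IsReversible.centered (h : IsReversible P π) : IsReversible (centered P π) π := fun x y ↦ by
  simp only [_root_.centered, of_apply, mul_sub, h x y, mul_comm (π x) (π y)]

lemma centered_mulVec (P : Matrix Ω Ω ℝ) (π f : Ω → ℝ) :
    centered P π *ᵥ f = P *ᵥ f - fun _ ↦ π ⬝ᵥ f := by
  funext x
  simp only [mulVec, dotProduct, centered, of_apply, sub_mul, Finset.sum_sub_distrib, Pi.sub_apply]

lemma vecMul_centered (P : Matrix Ω Ω ℝ) (π μ : Ω → ℝ) :
    μ ᵥ* centered P π = μ ᵥ* P - (∑ x, μ x) • π := by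
  funext y
  simp only [vecMul, dotProduct, centered, of_apply, mul_sub, Finset.sum_sub_distrib,
    ← Finset.sum_mul, Pi.sub_apply, Pi.smul_apply, smul_eq_mul]

lemma sum_eq_zero_of_vecMul_centered_eq_smul (hP : IsStochastic P) (hπ : IsProbVec π) (hl : l ≠ 0)
    (h : μ ᵥ* centered P π = l • μ) : ∑ x, μ x = 0 := by
  have hone : centered P π *ᵥ 1 = 0 := by
    rw [centered_mulVec]
    funext x
    simp [mulVec, dotProduct, hP.2, hπ.2]
  have hlμ : l * ∑ x, μ x = 0 := by
    rw [Finset.mul_sum]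
    simpa [h, dotProduct_one, hone] using (dotProduct_mulVec μ (centered P π) 1).symm
  exact (mul_eq_zero.mp hlμ).resolve_left hl

variable [DecidableEq Ω]

lemma centered_pow_mulVec (hπ : π ᵥ* P = π) (hg : π ⬝ᵥ g = 0) (k : ℕ) :
    centered P π ^ k *ᵥ g = P ^ k *ᵥ g := by
  have hmean : ∀ k, π ⬝ᵥ (P ^ k *ᵥ g) = 0 := fun k ↦ by
    induction k with
    | zero => simpa using hg
    | succ k ih => rw [pow_succ', ← mulVec_mulVec, dotProduct_mulVec, hπ, ih]
  induction k with
  | zero => simp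
  | succ k ih =>
    rw [pow_succ', ← mulVec_mulVec, ih, centered_mulVec, hmean, mulVec_mulVec, ← pow_succ']
    exact sub_zero _

lemma MixedWithin.exp_le_of_vecMul_eq_smul (hP : IsStochastic P) (ht : 0 ≤ t) {ε : ℝ}
    (hmix : MixedWithin (heatKernel P t) π ε) (hsum : ∑ x, μ x = 0) (hμ : μ ≠ 0)
    (h : μ ᵥ* P = l • μ) : Real.exp (-(t * (1 - l))) ≤ 2 * ε := by
  have hpow : ∀ k, μ ᵥ* P ^ k = l ^ k • μ := fun k ↦ by
    induction k with
    | zero => simp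
    | succ k ih => rw [pow_succ, ← vecMul_vecMul, ih, smul_vecMul, h, smul_smul, pow_succ]
  have hheat : ∀ y, (μ ᵥ* heatKernel P t) y = Real.exp (-(t * (1 - l))) * μ y := fun y ↦ by
    rw [vecMul_heatKernel hP ht, ← (hasSum_poissonWeight_mul_pow t l).tsum_eq, ← tsum_mul_right]
    simp only [hpow, poissonMean, Pi.smul_apply, smul_eq_mul, mul_assoc]
  refine le_of_mul_le_mul_right ?_ (sum_abs_pos hμ)
  simpa only [hheat, abs_mul, Real.abs_exp, ← Finset.mul_sum] using hmix.sum_abs_vecMul_le hsum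

lemma MixedWithin.one_le_mul_one_sub (hP : IsStochastic P) (ht : 0 ≤ t) (hL : 0 < L)
    (hmix : MixedWithin (heatKernel P t) π (Real.exp (-L) / 2)) (hsum : ∑ x, μ x = 0) (hμ : μ ≠ 0)
    (h : μ ᵥ* P = l • μ) : 1 ≤ (t / L + 1) * (1 - l) := by
  have hexp : Real.exp (-(t * (1 - l))) ≤ Real.exp (-L) := by
    linarith [hmix.exp_le_of_vecMul_eq_smul hP ht hsum hμ h]
  have hLt : 1 ≤ t / L * (1 - l) := by
    rw [div_mul_eq_mul_div, one_le_div hL]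
    exact neg_le_neg_iff.mp (Real.exp_le_exp.mp hexp)
  linarith [(abs_le.mp (hP.abs_le_one_of_vecMul_eq_smul hμ h)).2]

/-- A maximal inequality in `L²(π)`, in which the deviation is measured at times `m y` chosen
separately for each point. -/
theorem MixedWithin.sum_mul_sq_aveKernel_le (hP : IsStochastic P) (hπ : IsProbVec π)
    (hrev : IsReversible P π) (ht : 0 ≤ t) (hL : 0 < L)
    (hmix : MixedWithin (heatKernel P t) π (Real.exp (-L) / 2)) {w : ℕ} {m : Ω → ℕ}
    (hm : ∀ y, w ≤ m y) (hg : π ⬝ᵥ g = 0) :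
    ∑ y, π y * (aveKernel P (m y) *ᵥ g) y ^ 2
      ≤ 2 * (t / L + 1) / (w + 1) * ∑ y, π y * g y ^ 2 := by
  have hcentered : ∀ m, aveKernel P m *ᵥ g = aveKernel (centered P π) m *ᵥ g := fun m ↦ by
    simp only [aveKernel, smul_mulVec, add_mulVec, centered_pow_mulVec (hrev.vecMul_eq hP) hg]
  simp only [hcentered]
  refine hrev.centered.sum_mul_sq_aveKernel_le hπ.1 (le_add_of_nonneg_left (by positivity))
    (fun l μ hl hμ h ↦ ?_) hm g
  have hsum := sum_eq_zero_of_vecMul_centered_eq_smul hP hπ hl h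
  have hμP : μ ᵥ* P = l • μ := by simpa [vecMul_centered, hsum] using h
  exact ⟨(abs_le.mp (hP.abs_le_one_of_vecMul_eq_smul hμ hμP)).1,
    hmix.one_le_mul_one_sub hP ht hL hsum hμ hμP⟩

/-- The set of points at which the averaged chain started from `g` exceeds `η` at some time at
least `w`, in absolute value. -/
def deviationSet (P : Matrix Ω Ω ℝ) (g : Ω → ℝ) (w : ℕ) (η : ℝ) : Set Ω :=
  {y | ∃ m, w ≤ m ∧ η < |(aveKernel P m *ᵥ g) y|}

theorem MixedWithin.dotProduct_indicator_deviationSet_le (hP : IsStochastic P) (hπ : IsProbVec π)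
    (hrev : IsReversible P π) (ht : 0 ≤ t) (hL : 0 < L)
    (hmix : MixedWithin (heatKernel P t) π (Real.exp (-L) / 2)) (hg : π ⬝ᵥ g = 0)
    (hg₁ : ∀ y, |g y| ≤ 1) {η : ℝ} (hη : 0 < η) (w : ℕ) :
    π ⬝ᵥ (deviationSet P g w η).indicator 1 ≤ 2 * (t / L + 1) / ((w + 1) * η ^ 2) := by
  have hwitness : ∀ y, ∃ m, w ≤ m ∧
      (deviationSet P g w η).indicator 1 y * η ^ 2 ≤ (aveKernel P m *ᵥ g) y ^ 2 := fun y ↦ by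
    by_cases hy : y ∈ deviationSet P g w η
    · have ⟨m, hwm, hlt⟩ := hy
      refine ⟨m, hwm, ?_⟩
      rw [Set.indicator_of_mem hy, Pi.one_apply, one_mul, ← sq_abs (mulVec _ _ _)]
      gcongr
    · exact ⟨w, le_rfl, by rw [Set.indicator_of_notMem hy, zero_mul]; positivity⟩
  choose m hwm hm using hwitness
  have hg₂ : ∑ y, π y * g y ^ 2 ≤ 1 :=
    (hπ.dotProduct_mem_Icc fun y ↦ ⟨sq_nonneg (g y), (sq_le_one_iff_abs_le_one _).mpr (hg₁ y)⟩).2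
  rw [← div_div, le_div_iff₀ (by positivity)]
  calc (π ⬝ᵥ (deviationSet P g w η).indicator 1) * η ^ 2
      = ∑ y, π y * ((deviationSet P g w η).indicator 1 y * η ^ 2) := by
        simp only [dotProduct, Finset.sum_mul, mul_assoc]
    _ ≤ ∑ y, π y * (aveKernel P (m y) *ᵥ g) y ^ 2 := by
        gcongr with y
        exacts [hπ.1 y, hm y]
    _ ≤ 2 * (t / L + 1) / (w + 1) * ∑ y, π y * g y ^ 2 :=
        hmix.sum_mul_sq_aveKernel_le hP hπ hrev ht hL hwm hg
    _ ≤ 2 * (t / L + 1) / (w + 1) := mul_le_of_le_one_right (by positivity) hg₂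

end MaximalInequality

section ContToAve

variable {Ω : Type*} [Fintype Ω] {P : Matrix Ω Ω ℝ} {π g : Ω → ℝ} {B : Set Ω}

/-- The probability that the chain started from a given point is in `B` at the times
`0, 1, …, j`. -/
noncomputable def stayProb (P : Matrix Ω Ω ℝ) (B : Set Ω) : ℕ → Ω → ℝ
  | 0 => B.indicator 1
  | j + 1 => B.indicator (P *ᵥ stayProb P B j)

lemma IsStochastic.mulVec_mono (hP : IsStochastic P) {f g : Ω → ℝ} (hfg : f ≤ g) :
    P *ᵥ f ≤ P *ᵥ g :=
  fun x ↦ (hP.isProbVec x).dotProduct_mono hfg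

lemma stayProb_nonneg (hP : IsStochastic P) (B : Set Ω) (j : ℕ) : 0 ≤ stayProb P B j := by
  induction j with
  | zero => exact Set.indicator_nonneg fun _ _ ↦ zero_le_one
  | succ j ih =>
    exact Set.indicator_nonneg fun x _ ↦ by simpa using hP.mulVec_mono ih x

lemma antitone_stayProb (hP : IsStochastic P) (B : Set Ω) : Antitone (stayProb P B) := by
  refine antitone_nat_of_succ_le fun j ↦ ?_
  induction j with
  | zero =>
    have hone : P *ᵥ (1 : Ω → ℝ) = 1 := funext fun x ↦ (hP.isProbVec x).dotProduct_const 1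
    refine fun x ↦ Set.indicator_le_indicator' fun _ ↦ ?_
    rw [← hone]
    exact hP.mulVec_mono (Set.indicator_le_self' fun _ _ ↦ zero_le_one) x
  | succ j ih => exact fun x ↦ Set.indicator_le_indicator' fun _ ↦ hP.mulVec_mono ih x

lemma stayProb_le_indicator (hP : IsStochastic P) (B : Set Ω) (j : ℕ) :
    stayProb P B j ≤ B.indicator 1 :=
  antitone_stayProb hP B j.zero_le

variable [DecidableEq Ω]

lemma stayProb_le_pow_mulVec_indicator (hP : IsStochastic P) (B : Set Ω) {k n : ℕ} (hkn : k ≤ n) :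
    stayProb P B n ≤ P ^ k *ᵥ B.indicator 1 := by
  induction k generalizing n with
  | zero => simpa using stayProb_le_indicator hP B n
  | succ k ih =>
    obtain ⟨n, rfl⟩ := Nat.exists_eq_add_of_le' (Nat.one_le_of_lt hkn)
    rw [pow_succ', ← mulVec_mulVec]
    exact (Set.indicator_le_self' fun x _ ↦ by
      simpa using hP.mulVec_mono (stayProb_nonneg hP B n) x).trans
      (hP.mulVec_mono (ih (Nat.le_of_succ_le_succ hkn)))

/-- A Poisson time of mean `t < n` is rarely larger than `n`, and at that time the chain is close
to stationarity. -/
lemma MixedWithin.stayProb_le (hP : IsStochastic P) (hπ : IsProbVec π) {t ε : ℝ} {n : ℕ}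
    (ht : 0 ≤ t) (htn : t < n) (h : MixedWithin (heatKernel P t) π ε) (B : Set Ω) (x : Ω) :
    stayProb P B n x ≤ ε + π ⬝ᵥ B.indicator 1 + t / (n - t) ^ 2 := by
  have hB : ∀ y, B.indicator (1 : Ω → ℝ) y ∈ Set.Icc 0 1 := fun y ↦
    ⟨Set.indicator_nonneg (fun _ _ ↦ zero_le_one) y, Set.indicator_le_self' (by simp) y⟩
  have hk : ∀ k, (P ^ k *ᵥ B.indicator 1) x ∈ Set.Icc 0 1 := fun k ↦
    ((hP.pow k).isProbVec x).dotProduct_mem_Icc hB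
  have hheat : -(heatKernel P t *ᵥ B.indicator 1) x ≤ -stayProb P B n x + t / (n - t) ^ 2 := by
    rw [← Pi.neg_apply, ← mulVec_neg, heatKernel_mulVec hP ht]
    simp only [mulVec_neg, Pi.neg_apply]
    refine poissonMean_le_of_le_near ht (sub_pos.mpr htn) (C := 1) (fun k ↦ ?_) (fun k hk ↦ ?_)
      fun k ↦ ?_
    · rw [abs_neg, abs_of_nonneg (hk k).1]
      exact (hk k).2
    · have hkn : k ≤ n := by
        rw [← Nat.cast_le (α := ℝ)]
        linarith [(abs_lt.mp hk).2]
      exact neg_le_neg (stayProb_le_pow_mulVec_indicator hP B hkn x)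
    · linarith [(hk k).1, (stayProb_le_indicator hP B n x).trans (hB x).2]
  linarith [(abs_le.mp (h.abs_mulVec_sub_le (hP.heatKernel ht) hπ hB x)).2]

lemma abs_aveKernel_mulVec_le_stayProb_add (hP : IsStochastic P) (hg : ∀ y, |g y| ≤ 1) {η : ℝ}
    (hη : 0 ≤ η) {w j m : ℕ} (hm : w + j ≤ m) (x : Ω) :
    |(aveKernel P m *ᵥ g) x| ≤ stayProb P (deviationSet P g w η) j x + η := by
  induction j generalizing m x with
  | zero =>
    by_cases hx : x ∈ deviationSet P g w η
    · have hx_prob := (hP.aveKernel m).isProbVec x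
      rw [stayProb, Set.indicator_of_mem hx]
      exact ((hx_prob.abs_dotProduct_le hg).trans_eq (hx_prob.dotProduct_const 1)).trans
        (le_add_of_nonneg_right hη)
    · rw [stayProb, Set.indicator_of_notMem hx, zero_add]
      exact not_lt.mp fun hlt ↦ hx ⟨m, hm, hlt⟩
  | succ j ih =>
    by_cases hx : x ∈ deviationSet P g w η
    · obtain ⟨m, rfl⟩ := Nat.exists_eq_add_of_le' (Nat.one_le_of_lt hm)
      rw [stayProb, Set.indicator_of_mem hx, aveKernel_add, pow_one, ← mulVec_mulVec]
      refine ((hP.isProbVec x).abs_dotProduct_le fun y ↦ ih (by omega) y).trans_eq ?_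
      exact (dotProduct_add _ _ _).trans (congrArg _ ((hP.isProbVec x).dotProduct_const η))
    · rw [stayProb, Set.indicator_of_notMem hx, zero_add]
      exact not_lt.mp fun hlt ↦ hx ⟨m, by omega, hlt⟩

/-- With high probability the chain leaves the deviation set while at least `w` of the `w + n`
steps remain; from there on the averaged chain is close to stationarity. -/
theorem MixedWithin.aveKernel_of_heatKernel (hP : IsStochastic P) (hπ : IsProbVec π)
    (hrev : IsReversible P π) {t t₀ L ε η : ℝ} {w n : ℕ} (ht : 0 ≤ t) (ht₀ : 0 ≤ t₀) (hL : 0 < L)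
    (hη : 0 < η) (htn : t < n) (h : MixedWithin (heatKernel P t) π ε)
    (h₀ : MixedWithin (heatKernel P t₀) π (Real.exp (-L) / 2)) :
    MixedWithin (aveKernel P (w + n)) π
      (ε + 2 * (t₀ / L + 1) / ((w + 1) * η ^ 2) + t / (n - t) ^ 2 + η) := by
  refine mixedWithin_of_mulVec_sub_le (hP.aveKernel _) hπ fun f hf x ↦ ?_
  set g : Ω → ℝ := f - fun _ ↦ π ⬝ᵥ f with hg
  have hπf := hπ.dotProduct_mem_Icc hf
  have hg₀ : π ⬝ᵥ g = 0 := by rw [hg, dotProduct_sub, hπ.dotProduct_const, sub_self]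
  have hg₁ : ∀ y, |g y| ≤ 1 := fun y ↦
    abs_le.mpr ⟨by linarith [(hf y).1, hπf.2, Pi.sub_apply f (fun _ ↦ π ⬝ᵥ f) y],
      by linarith [(hf y).2, hπf.1, Pi.sub_apply f (fun _ ↦ π ⬝ᵥ f) y]⟩
  have hfg : (aveKernel P (w + n) *ᵥ f) x - π ⬝ᵥ f = (aveKernel P (w + n) *ᵥ g) x := by
    rw [hg, mulVec_sub, Pi.sub_apply]
    exact congrArg _ (((hP.aveKernel _).isProbVec x).dotProduct_const _).symm
  have hstay := abs_aveKernel_mulVec_le_stayProb_add hP hg₁ hη.le le_rfl (w := w) (j := n) x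
  have hstay_le := h.stayProb_le hP hπ ht htn (deviationSet P g w η) x
  have hdev := h₀.dotProduct_indicator_deviationSet_le hP hπ hrev ht₀ hL hg₀ hg₁ hη w
  linarith [le_abs_self ((aveKernel P (w + n) *ᵥ g) x)]

end ContToAve

section Cutoff

/-- The `ε`-mixing time of a distance function `d` along a set `S` of admissible times. As an
infimum of reals it is `0` if the distance never drops to `ε`. -/
noncomputable def mixTime (S : Set ℝ) (d : ℝ → ℝ) (ε : ℝ) : ℝ := sInf {t | t ∈ S ∧ d t ≤ ε}

/-- The distance `d` drops to `ε` at an admissible time which is at most `T`. -/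
def MixedBy (S : Set ℝ) (d : ℝ → ℝ) (T ε : ℝ) : Prop := ∃ t ∈ S, t ≤ T ∧ d t ≤ ε

/-- Cutoff for a sequence of distance functions, in terms of the ratios of mixing times. -/
def HasCutoff (S : Set ℝ) (d : ℕ → ℝ → ℝ) : Prop :=
  ∀ ε, 0 < ε → ε < 1 → Tendsto (fun n ↦ mixTime S (d n) ε / mixTime S (d n) (1 - ε)) atTop (nhds 1)

/-- Cutoff around the times `T n`: up to a factor tending to `1`, the distance drops from almost
`1` to almost `0` at time `T n`. -/
def HasCutoffAt (S : Set ℝ) (d : ℕ → ℝ → ℝ) (T : ℕ → ℝ) : Prop :=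
  ∀ ε, 0 < ε → ε < 1 → ∀ δ, 0 < δ → δ < 1 →
    ∀ᶠ n in atTop, MixedBy S (d n) ((1 + δ) * T n) ε ∧ ¬ MixedBy S (d n) ((1 - δ) * T n) ε

/-- On the time scale `T`, if `d` is small then so is `d'` shortly after. -/
def MixingTransfer (S : Set ℝ) (d : ℕ → ℝ → ℝ) (S' : Set ℝ) (d' : ℕ → ℝ → ℝ) (T : ℕ → ℝ) : Prop :=
  ∀ a b ε ε', 0 < a → a < b → ε < ε' →
    ∀ᶠ n in atTop, MixedBy S (d n) (a * T n) ε → MixedBy S' (d' n) (b * T n) ε'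

variable {S S' : Set ℝ}

lemma MixedBy.mono {d : ℝ → ℝ} {T T' ε ε' : ℝ} (hT : T ≤ T') (hε : ε ≤ ε') (h : MixedBy S d T ε) :
    MixedBy S d T' ε' := by
  obtain ⟨t, htS, htT, htε⟩ := h
  exact ⟨t, htS, htT.trans hT, htε.trans hε⟩

section MixTime

variable {d : ℝ → ℝ} {T T' ε ε' : ℝ}

lemma MixedBy.mixTime_le (hS : S ⊆ Set.Ici 0) (h : MixedBy S d T ε) : mixTime S d ε ≤ T := by
  obtain ⟨t, htS, htT, htε⟩ := h
  have hbdd : BddBelow {t | t ∈ S ∧ d t ≤ ε} := ⟨0, fun s hs ↦ hS hs.1⟩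
  exact (csInf_le hbdd ⟨htS, htε⟩).trans htT

lemma MixedBy.of_mixTime_lt (h : MixedBy S d T' ε) (hT : mixTime S d ε < T) : MixedBy S d T ε := by
  obtain ⟨t, htS, -, htε⟩ := h
  have hne : {t | t ∈ S ∧ d t ≤ ε}.Nonempty := ⟨t, htS, htε⟩
  obtain ⟨s, ⟨hsS, hsε⟩, hsT⟩ := exists_lt_of_csInf_lt hne hT
  exact ⟨s, hsS, hsT.le, hsε⟩

lemma exists_mixedBy_of_mixTime_ne_zero (h : mixTime S d ε ≠ 0) : ∃ T, MixedBy S d T ε := by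
  obtain ⟨t, htS, htε⟩ : {t | t ∈ S ∧ d t ≤ ε}.Nonempty := by
    by_contra hempty
    exact h (by rw [mixTime, Set.not_nonempty_iff_eq_empty.mp hempty, Real.sInf_empty])
  exact ⟨t, t, htS, le_rfl, htε⟩

lemma mixTime_nonneg (hS : S ⊆ Set.Ici 0) (d : ℝ → ℝ) (ε : ℝ) : 0 ≤ mixTime S d ε :=
  Real.sInf_nonneg fun _ ht ↦ hS ht.1

lemma MixedBy.mixTime_anti (hS : S ⊆ Set.Ici 0) (h : MixedBy S d T ε) (hε : ε ≤ ε') :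
    mixTime S d ε' ≤ mixTime S d ε :=
  le_of_forall_gt_imp_ge_of_dense fun _ hT ↦ ((h.of_mixTime_lt hT).mono le_rfl hε).mixTime_le hS

end MixTime

variable {d d' : ℕ → ℝ → ℝ} {T : ℕ → ℝ}

theorem HasCutoff.hasCutoffAt (hS : S ⊆ Set.Ici 0) (h : HasCutoff S d) :
    HasCutoffAt S d fun n ↦ mixTime S (d n) (1 / 2) := by
  intro ε hε₀ hε₁ δ hδ₀ _
  set ε₀ := min ε (1 - ε)
  have hε₀ε : ε₀ ≤ ε := min_le_left _ _
  have hεε₀ : ε ≤ 1 - ε₀ := by linarith [min_le_right ε (1 - ε)]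
  have hε₀_pos : 0 < ε₀ := lt_min hε₀ (by linarith)
  have hratio := h ε₀ hε₀_pos (by linarith)
  filter_upwards [hratio.eventually_const_lt one_pos,
    hratio.eventually_lt_const (show (1 : ℝ) < 1 + δ by linarith)] with n hn₀ hn
  obtain ⟨hne, hne'⟩ := div_ne_zero_iff.mp hn₀.ne'
  have hpos : 0 < mixTime S (d n) (1 - ε₀) := (mixTime_nonneg hS _ _).lt_of_ne' hne'
  rw [div_lt_iff₀ hpos] at hn
  obtain ⟨T₀, hT₀⟩ := exists_mixedBy_of_mixTime_ne_zero hne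
  have hhalf : mixTime S (d n) (1 / 2) ≤ mixTime S (d n) ε₀ := hT₀.mixTime_anti hS (by linarith)
  have hhalf' : mixTime S (d n) (1 - ε₀) ≤ mixTime S (d n) (1 / 2) :=
    (hT₀.mono le_rfl (by linarith)).mixTime_anti hS (by linarith)
  refine ⟨(hT₀.of_mixTime_lt (hn.trans_le (by gcongr))).mono le_rfl hε₀ε, fun hmixed ↦ ?_⟩
  have hle : mixTime S (d n) (1 - ε₀) ≤ (1 - δ) * mixTime S (d n) (1 / 2) :=
    (hmixed.mono le_rfl hεε₀).mixTime_le hS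
  nlinarith

lemma HasCutoffAt.eventually_pos (h : HasCutoffAt S d T) : ∀ᶠ n in atTop, 0 < T n := by
  filter_upwards [h (1 / 2) (by norm_num) (by norm_num) (1 / 2) (by norm_num) (by norm_num)]
    with n ⟨hmixed, hnot⟩
  by_contra! hT
  exact hnot (hmixed.mono (by linarith) le_rfl)

lemma HasCutoffAt.eventually_mixedBy (h : HasCutoffAt S d T) {ε : ℝ} (hε : 0 < ε) :
    ∀ᶠ n in atTop, MixedBy S (d n) (3 / 2 * T n) ε := by
  filter_upwards [h (min ε (1 / 2)) (by positivity) ((min_le_right _ _).trans_lt one_half_lt_one)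
    (1 / 2) (by norm_num) (by norm_num)] with n ⟨hmixed, _⟩
  exact hmixed.mono (by norm_num) (min_le_left _ _)

lemma HasCutoffAt.tendsto_mixTime_div (hS : S ⊆ Set.Ici 0) (h : HasCutoffAt S d T) {ε : ℝ}
    (hε₀ : 0 < ε) (hε₁ : ε < 1) : Tendsto (fun n ↦ mixTime S (d n) ε / T n) atTop (nhds 1) := by
  refine Metric.tendsto_nhds.mpr fun δ hδ ↦ ?_
  set δ' := min (δ / 2) (1 / 2)
  have hδ'₀ : 0 < δ' := by positivity
  have hδ' : δ' < δ := (min_le_left _ _).trans_lt (half_lt_self hδ)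
  have hδ'₁ : δ' < 1 := (min_le_right _ _).trans_lt one_half_lt_one
  filter_upwards [h.eventually_pos, h ε hε₀ hε₁ δ' hδ'₀ hδ'₁] with n hT ⟨hmixed, hnot⟩
  have hupper : mixTime S (d n) ε / T n ≤ 1 + δ' := (div_le_iff₀ hT).mpr (hmixed.mixTime_le hS)
  have hlower : 1 - δ' ≤ mixTime S (d n) ε / T n := (le_div_iff₀ hT).mpr <| by
    by_contra! hlt
    exact hnot (hmixed.of_mixTime_lt hlt)
  rw [Real.dist_eq, abs_lt]
  constructor <;> linarith

theorem HasCutoffAt.hasCutoff (hS : S ⊆ Set.Ici 0) (h : HasCutoffAt S d T) : HasCutoff S d := by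
  intro ε hε₀ hε₁
  have hlim := (h.tendsto_mixTime_div hS hε₀ hε₁).div
    (h.tendsto_mixTime_div hS (sub_pos.mpr hε₁) (sub_lt_self 1 hε₀)) one_ne_zero
  rw [div_one] at hlim
  refine hlim.congr' ?_
  filter_upwards [h.eventually_pos] with n hT
  exact div_div_div_cancel_right₀ hT.ne' _ _

theorem HasCutoffAt.transfer (h : HasCutoffAt S d T) (hto : MixingTransfer S d S' d' T)
    (hback : MixingTransfer S' d' S d T) : HasCutoffAt S' d' T := by
  intro ε hε₀ hε₁ δ hδ₀ hδ₁
  filter_upwards [h (ε / 2) (by linarith) (by linarith) (δ / 2) (by linarith) (by linarith),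
    h ((1 + ε) / 2) (by linarith) (by linarith) (δ / 2) (by linarith) (by linarith),
    hto (1 + δ / 2) (1 + δ) (ε / 2) ε (by linarith) (by linarith) (by linarith),
    hback (1 - δ) (1 - δ / 2) ε ((1 + ε) / 2) (by linarith) (by linarith) (by linarith)]
    with n ⟨hmixed, _⟩ ⟨_, hnot⟩ hto hback
  exact ⟨hto hmixed, hnot ∘ hback⟩

end Cutoff

section SingleStep

variable {Ω : Type*} [Fintype Ω] [DecidableEq Ω] {P : Matrix Ω Ω ℝ} {π : Ω → ℝ} {ε t : ℝ}

lemma exp_neg_le_heatKernel_apply_self (hP : IsStochastic P) (ht : 0 ≤ t) (x : Ω) :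
    Real.exp (-t) ≤ heatKernel P t x x := by
  have hsum := summable_poissonWeight_mul ht fun k ↦ (hP.pow k).abs_apply_le_one x x
  simpa [poissonWeight, heatKernel, poissonMean] using hsum.le_tsum 0 fun k _ ↦
    mul_nonneg (poissonWeight_nonneg ht k) ((hP.pow k).1 x x)

/-- Each starting point keeps mass `exp (-t)` up to time `t`. If that is much more than `ε`, then
every atom of `π` has mass at least `ε`, and even the point masses are not far from `π`. -/
lemma MixedWithin.heatKernel_zero (hP : IsStochastic P) (hπ : IsProbVec π) (ht : 0 ≤ t)
    (hε : 2 * ε ≤ Real.exp (-t)) (h : MixedWithin (heatKernel P t) π ε) :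
    MixedWithin (heatKernel P 0) π (1 - ε) := by
  have hatom : ∀ x, ε ≤ π x := fun x ↦ by
    have hclose := h.abs_mulVec_sub_le (hP.heatKernel ht) hπ (f := Pi.single x 1)
      (fun y ↦ by by_cases hy : y = x <;> simp [hy]) x
    rw [mulVec_single_one, dotProduct_single_one] at hclose
    linarith [exp_neg_le_heatKernel_apply_self hP ht x, (abs_le.mp hclose).2,
      show (heatKernel P t).col x x = heatKernel P t x x from rfl]
  refine mixedWithin_of_mulVec_sub_le (hP.heatKernel le_rfl) hπ fun f hf x ↦ ?_
  have hzero : (heatKernel P 0 *ᵥ f) x = f x := by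
    rw [heatKernel_mulVec hP le_rfl, poissonMean, tsum_eq_single 0 fun k hk ↦ by
      simp [poissonWeight, hk]]
    simp [poissonWeight]
  have hmean : π x * f x ≤ π ⬝ᵥ f := Finset.single_le_sum
    (f := fun y ↦ π y * f y) (fun y _ ↦ mul_nonneg (hπ.1 y) (hf y).1) (Finset.mem_univ x)
  have hε₁ : ε ≤ 1 / 2 := by linarith [Real.exp_le_one_iff.mpr (neg_nonpos.mpr ht)]
  nlinarith [hatom x, (hf x).1, (hf x).2]

lemma MixedWithin.aveKernel_of_succ (hP : IsStochastic P) (hπ : IsProbVec π) {m : ℕ}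
    (h : MixedWithin (aveKernel P (m + 1)) π ε) : MixedWithin (aveKernel P m) π (1 / 2 + ε) := by
  refine mixedWithin_of_mulVec_sub_le (hP.aveKernel m) hπ fun f hf x ↦ ?_
  have hf' : ∀ k, (P ^ k *ᵥ f) x ∈ Set.Icc 0 1 := fun k ↦
    ((hP.pow k).isProbVec x).dotProduct_mem_Icc hf
  have hclose := (abs_le.mp (h.abs_mulVec_sub_le (hP.aveKernel _) hπ hf x)).2
  rw [aveKernel_mulVec_apply] at hclose ⊢
  linarith [(hf' m).2, (hf' (m + 2)).1]

end SingleStep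

section Comparison

variable {Ω : ℕ → Type*} [∀ n, Fintype (Ω n)] [∀ n, DecidableEq (Ω n)]
  {P : ∀ n, Matrix (Ω n) (Ω n) ℝ} {π : ∀ n, Ω n → ℝ} {T : ℕ → ℝ}

lemma mixedBy_contDistMax_iff {Ω : Type*} [Fintype Ω] [DecidableEq Ω] [Nonempty Ω]
    (P : Matrix Ω Ω ℝ) (π : Ω → ℝ) (T ε : ℝ) : MixedBy (Set.Ici 0) (contDistMax P π) T ε ↔
      ∃ t, 0 ≤ t ∧ t ≤ T ∧ MixedWithin (heatKernel P t) π ε := by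
  simp only [MixedBy, contDistMax_le_iff, Set.mem_Ici]

lemma mixedBy_aveDistMax_iff {Ω : Type*} [Fintype Ω] [DecidableEq Ω] [Nonempty Ω]
    (P : Matrix Ω Ω ℝ) (π : Ω → ℝ) (T ε : ℝ) :
    MixedBy (Set.range Nat.cast) (aveDistMax P π) T ε ↔
      ∃ m : ℕ, m ≤ T ∧ MixedWithin (aveKernel P m) π ε := by
  simp only [MixedBy, Set.exists_range_iff, aveDistMax_le_iff]

theorem HasCutoffAt.tendsto_atTop_of_contDistMax (hP : ∀ n, IsStochastic (P n))
    (hπ : ∀ n, IsProbVec (π n))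
    (h : HasCutoffAt (Set.Ici 0) (fun n ↦ contDistMax (P n) (π n)) T) : Tendsto T atTop atTop := by
  have := fun n ↦ (hπ n).nonempty
  refine tendsto_atTop.mpr fun K ↦ ?_
  set ε := Real.exp (-(2 * |K|)) / 2 with hε
  have hε₀ : 0 < ε := by positivity
  have hε₁ : ε < 1 := by linarith [Real.exp_le_one_iff.mpr (show -(2 * |K|) ≤ 0 by simp)]
  filter_upwards [h.eventually_pos, h ε hε₀ hε₁ (1 / 2) (by norm_num) (by norm_num),
    h (1 - ε) (by linarith) (by linarith) (1 / 2) (by norm_num) (by norm_num)]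
    with n hT ⟨hmixed, _⟩ ⟨_, hnot⟩
  simp only [mixedBy_contDistMax_iff] at hmixed hnot
  obtain ⟨t, ht₀, htT, ht⟩ := hmixed
  by_contra! hTK
  refine hnot ⟨0, le_rfl, by positivity, ht.heatKernel_zero (hP n) (hπ n) ht₀ ?_⟩
  rw [hε, mul_div_cancel₀ _ two_ne_zero, Real.exp_le_exp]
  linarith [le_abs_self K]

theorem HasCutoffAt.tendsto_atTop_of_aveDistMax (hP : ∀ n, IsStochastic (P n))
    (hπ : ∀ n, IsProbVec (π n))
    (h : HasCutoffAt (Set.range Nat.cast) (fun n ↦ aveDistMax (P n) (π n)) T) :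
    Tendsto T atTop atTop := by
  have := fun n ↦ (hπ n).nonempty
  refine tendsto_atTop.mpr fun K ↦ ?_
  set δ := 1 / (2 * (|K| + 1)) with hδ
  have hδ₀ : 0 < δ := by positivity
  have hδ₁ : δ < 1 := (div_lt_one (by positivity)).mpr (by linarith [abs_nonneg K])
  filter_upwards [h.eventually_pos, h (1 / 4) (by norm_num) (by norm_num) δ hδ₀ hδ₁,
    h (3 / 4) (by norm_num) (by norm_num) δ hδ₀ hδ₁] with n hT ⟨hmixed, _⟩ ⟨_, hnot⟩
  simp only [mixedBy_aveDistMax_iff] at hmixed hnot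
  obtain ⟨m, hmT, hm⟩ := hmixed
  cases m with
  | zero =>
    refine absurd ⟨0, ?_, hm.mono (by norm_num)⟩ hnot
    exact Nat.cast_zero.trans_le (mul_nonneg (by linarith) hT.le)
  | succ k =>
    have hk : (1 - δ) * T n < k := by
      by_contra! hk
      exact hnot ⟨k, hk, (hm.aveKernel_of_succ (hP n) (hπ n)).mono (by norm_num)⟩
    have hwindow : 1 ≤ 2 * δ * T n := by
      push_cast at hmT
      linarith
    have hδK : 2 * δ * (|K| + 1) = 1 := by rw [hδ]; field_simp
    nlinarith [le_abs_self K]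

theorem mixingTransfer_ave_cont (hP : ∀ n, IsStochastic (P n)) (hπ : ∀ n, IsProbVec (π n))
    (hT : Tendsto T atTop atTop) :
    MixingTransfer (Set.range Nat.cast) (fun n ↦ aveDistMax (P n) (π n))
      (Set.Ici 0) (fun n ↦ contDistMax (P n) (π n)) T := by
  have := fun n ↦ (hπ n).nonempty
  intro a b ε ε' ha hab hεε'
  have hb : 0 < b := ha.trans hab
  have hlate : Tendsto (fun n ↦ b / (b - a) ^ 2 / T n) atTop (nhds 0) :=
    tendsto_const_nhds.div_atTop hT
  have hshift : Tendsto (fun n ↦ 1 / (2 * √(b * T n))) atTop (nhds 0) :=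
    tendsto_const_nhds.div_atTop
      ((Real.tendsto_sqrt_atTop.comp (hT.const_mul_atTop hb)).const_mul_atTop two_pos)
  have hη : 0 < (ε' - ε) / 2 := by linarith
  filter_upwards [hT.eventually_gt_atTop 0, hlate.eventually_le_const hη,
    hshift.eventually_le_const hη] with n hTn hlate hshift hmixed
  simp only [mixedBy_aveDistMax_iff, mixedBy_contDistMax_iff] at hmixed ⊢
  obtain ⟨m, hmT, hm⟩ := hmixed
  have hab_T : 0 < b * T n - a * T n := by nlinarith
  refine ⟨b * T n, by positivity, le_rfl,
    (hm.heatKernel_of_aveKernel (hP n) (hπ n) (s := b * T n) (by linarith)).mono ?_⟩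
  have hchebyshev : b * T n / (b * T n - m) ^ 2 ≤ b / (b - a) ^ 2 / T n := calc
    b * T n / (b * T n - m) ^ 2 ≤ b * T n / (b * T n - a * T n) ^ 2 := by gcongr
    _ = b / (b - a) ^ 2 / T n := by
      have : b - a ≠ 0 := (sub_pos.mpr hab).ne'
      rw [← sub_mul]
      field_simp
  linarith

/-- The burn-in time `⌊δ T⌋` is of the order of `T`, so it defeats the relaxation time, which is at
most `2 T / L + 1`. -/
lemma MixedWithin.aveKernel_floor_add_ceil {Ω : Type*} [Fintype Ω] [DecidableEq Ω]
    {P : Matrix Ω Ω ℝ} {π : Ω → ℝ} (hP : IsStochastic P) (hπ : IsProbVec π)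
    (hrev : IsReversible P π) {a δ η L T t t₀ ε : ℝ} (hδ : 0 < δ) (hη : 0 < η) (hL : 0 < L)
    (hT : 0 < T) (ht : 0 ≤ t) (htT : t ≤ a * T) (ht₀ : 0 ≤ t₀) (ht₀T : t₀ ≤ 2 * T)
    (h : MixedWithin (heatKernel P t) π ε)
    (h₀ : MixedWithin (heatKernel P t₀) π (Real.exp (-L) / 2)) :
    MixedWithin (aveKernel P (⌊δ * T⌋₊ + ⌈(a + δ) * T⌉₊)) π
      (ε + (4 / (δ * η ^ 2 * L) + 2 / (δ * η ^ 2) / T) + a / δ ^ 2 / T + η) := by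
  have hwindow : t + δ * T ≤ ⌈(a + δ) * T⌉₊ := by linarith [Nat.le_ceil ((a + δ) * T)]
  have hδT : 0 < δ * T := by positivity
  refine (h.aveKernel_of_heatKernel hP hπ hrev ht ht₀ hL hη (by linarith) h₀).mono ?_
  gcongr ε + ?_ + ?_ + η
  · calc 2 * (t₀ / L + 1) / ((⌊δ * T⌋₊ + 1) * η ^ 2)
        ≤ 2 * (2 * T / L + 1) / (δ * T * η ^ 2) := by
          gcongr
          exact (Nat.lt_floor_add_one _).le
      _ = 4 / (δ * η ^ 2 * L) + 2 / (δ * η ^ 2) / T := by field_simp; ring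
  · calc t / (⌈(a + δ) * T⌉₊ - t) ^ 2 ≤ a * T / (δ * T) ^ 2 := by
          gcongr
          · linarith
          · linarith
      _ = a / δ ^ 2 / T := by field_simp

theorem mixingTransfer_cont_ave (hP : ∀ n, IsStochastic (P n)) (hπ : ∀ n, IsProbVec (π n))
    (hrev : ∀ n, IsReversible (P n) (π n)) (hT : Tendsto T atTop atTop)
    (hmix : ∀ ε, 0 < ε →
      ∀ᶠ n in atTop, MixedBy (Set.Ici 0) (contDistMax (P n) (π n)) (2 * T n) ε) :
    MixingTransfer (Set.Ici 0) (fun n ↦ contDistMax (P n) (π n))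
      (Set.range Nat.cast) (fun n ↦ aveDistMax (P n) (π n)) T := by
  have := fun n ↦ (hπ n).nonempty
  intro a b ε ε' ha hab hεε'
  set δ := (b - a) / 4 with hδ_def
  set η := (ε' - ε) / 2 with hη_def
  have hδ : 0 < δ := by simp only [hδ_def]; linarith
  have hη : 0 < η := by simp only [hη_def]; linarith
  set L := 16 / (δ * η ^ 3)
  have hL : 0 < L := by positivity
  have hdev : Tendsto (fun n ↦ 2 / (δ * η ^ 2) / T n) atTop (nhds 0) :=
    tendsto_const_nhds.div_atTop hT
  have hlate : Tendsto (fun n ↦ a / δ ^ 2 / T n) atTop (nhds 0) :=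
    tendsto_const_nhds.div_atTop hT
  filter_upwards [hT.eventually_gt_atTop 0, hT.eventually_ge_atTop (1 / (2 * δ)),
    hdev.eventually_le_const (show 0 < η / 4 by positivity),
    hlate.eventually_le_const (show 0 < η / 4 by positivity),
    hmix (Real.exp (-L) / 2) (by positivity)] with n hTn hTδ hdev hlate hmix hmixed
  simp only [mixedBy_aveDistMax_iff, mixedBy_contDistMax_iff] at hmixed hmix ⊢
  obtain ⟨t, ht, htT, hmixed⟩ := hmixed
  obtain ⟨t₀, ht₀, ht₀T, hmixed₀⟩ := hmix
  refine ⟨⌊δ * T n⌋₊ + ⌈(a + δ) * T n⌉₊, ?_,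
    (hmixed.aveKernel_floor_add_ceil (hP n) (hπ n) (hrev n) hδ hη hL hTn ht htT ht₀ ht₀T
      hmixed₀).mono ?_⟩
  · have hround : 1 ≤ 2 * δ * T n := (div_le_iff₀' (by positivity)).mp hTδ
    have hb : b = a + 4 * δ := by rw [hδ_def]; ring
    push_cast
    rw [hb]
    linarith [Nat.floor_le (show 0 ≤ δ * T n by positivity),
      Nat.ceil_lt_add_one (show 0 ≤ (a + δ) * T n by positivity)]
  · have hL_eq : 4 / (δ * η ^ 2 * L) = η / 4 := by simp only [L]; field_simp; norm_num
    linarith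

end Comparison

section Equivalence

lemma contMix_eq_mixTime {Ω : Type*} [Fintype Ω] [DecidableEq Ω] (P : Matrix Ω Ω ℝ) (π : Ω → ℝ)
    (ε : ℝ) : contMix P π ε = mixTime (Set.Ici 0) (contDistMax P π) ε :=
  rfl

lemma aveMix_eq_mixTime {Ω : Type*} [Fintype Ω] [DecidableEq Ω] (P : Matrix Ω Ω ℝ) (π : Ω → ℝ)
    (ε : ℝ) : (aveMix P π ε : ℝ) = mixTime (Set.range Nat.cast) (aveDistMax P π) ε := by
  obtain hempty | hne := {m : ℕ | aveDistMax P π m ≤ ε}.eq_empty_or_nonempty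
  · have : {t : ℝ | t ∈ Set.range Nat.cast ∧ aveDistMax P π t ≤ ε} = ∅ := by
      rw [Set.eq_empty_iff_forall_notMem]
      rintro _ ⟨⟨m, rfl⟩, hm⟩
      exact hempty.subset hm
    simp only [aveMix, mixTime, hempty, this, Nat.sInf_empty, Real.sInf_empty, Nat.cast_zero]
  · symm
    refine IsLeast.csInf_eq ⟨⟨Set.mem_range_self _, Nat.sInf_mem hne⟩, ?_⟩
    rintro _ ⟨⟨m, rfl⟩, hm⟩
    exact Nat.cast_le.mpr (Nat.sInf_le hm)

variable {Ω : ℕ → Type} [∀ n, Fintype (Ω n)] [∀ n, DecidableEq (Ω n)]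
  {P : ∀ n, Matrix (Ω n) (Ω n) ℝ} {π : ∀ n, Ω n → ℝ} {T : ℕ → ℝ}

theorem hasCutoffAt_contDistMax_iff (hP : ∀ n, IsStochastic (P n)) (hπ : ∀ n, IsProbVec (π n))
    (hrev : ∀ n, IsReversible (P n) (π n)) :
    HasCutoffAt (Set.Ici 0) (fun n ↦ contDistMax (P n) (π n)) T ↔
      HasCutoffAt (Set.range Nat.cast) (fun n ↦ aveDistMax (P n) (π n)) T := by
  constructor <;> intro h
  · have hT := h.tendsto_atTop_of_contDistMax hP hπ
    refine h.transfer (mixingTransfer_cont_ave hP hπ hrev hT fun ε hε ↦ ?_)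
      (mixingTransfer_ave_cont hP hπ hT)
    filter_upwards [h.eventually_pos, h.eventually_mixedBy hε] with n hTn hmixed
    exact hmixed.mono (by linarith) le_rfl
  · have hT := h.tendsto_atTop_of_aveDistMax hP hπ
    have hto := mixingTransfer_ave_cont hP hπ hT
    refine h.transfer hto (mixingTransfer_cont_ave hP hπ hrev hT fun ε hε ↦ ?_)
    filter_upwards [h.eventually_mixedBy (half_pos hε),
      hto (3 / 2) 2 (ε / 2) ε (by norm_num) (by norm_num) (half_lt_self hε)]
      with n hmixed hto
    exact hto hmixed

theorem contCutoff_iff_aveCutoff_general (hP : ∀ n, IsStochastic (P n))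
    (hπ : ∀ n, IsProbVec (π n)) (hrev : ∀ n, IsReversible (P n) (π n)) :
    ContCutoff P π ↔ AveCutoff P π := by
  have hrange : Set.range (Nat.cast : ℕ → ℝ) ⊆ Set.Ici 0 :=
    Set.range_subset_iff.mpr fun m ↦ Set.mem_Ici.mpr m.cast_nonneg
  have hequiv {T : ℕ → ℝ} := hasCutoffAt_contDistMax_iff hP hπ hrev (T := T)
  simp only [ContCutoff, AveCutoff, contMix_eq_mixTime, aveMix_eq_mixTime]
  exact ⟨fun h ↦ (hequiv.mp (HasCutoff.hasCutoffAt subset_rfl h)).hasCutoff hrange,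
    fun h ↦ (hequiv.mpr (HasCutoff.hasCutoffAt hrange h)).hasCutoff subset_rfl⟩

end Equivalence

/-- **Corollary 1.5 of Hermon–Peres, (i) ↔ (iii).**
A sequence of finite irreducible reversible Markov chains exhibits a continuous-time cutoff
iff it exhibits an averaged cutoff. -/
theorem contCutoff_iff_aveCutoff :
    ∀ (Ω : ℕ → Type) [∀ n, Fintype (Ω n)] [∀ n, DecidableEq (Ω n)] [∀ n, Nonempty (Ω n)]
      (P : ∀ n, Matrix (Ω n) (Ω n) ℝ) (pi : ∀ n, Ω n → ℝ),
      (∀ n, IsRevMC (P n) (pi n)) →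
      (ContCutoff P pi ↔ AveCutoff P pi) :=
  fun _ _ _ _ _ _ h ↦ contCutoff_iff_aveCutoff_general (fun n ↦ (h n).1.1)
    (fun n ↦ (h n).1.2.2.1) fun n ↦ (h n).2
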